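/- arXiv:2012.11675 — 2 statements merged into one kernel-verified Lean document; each statement's English description precedes it below -/
import Mathlib

section
/- Fix ε > 0. There exist constants c, C > 0 such that for every ζ ∈ (0,π/2] (i.e. −1 < Δ ≤ 0) and every q ∈ [0,∞): (i) for every x ∈ ℝ, 0 < ρ(x) ≤ ρ(x|q) ≤ ρ(x) + ρ(q); (ii) ρ(·|q) is differentiable and for every x ∈ [−q−ε, q+ε], |ρ'(x|q)| ≤ (C/ζ)·e^{πε/ζ}·ρ(x|q); (iii) for every m ∈ [0,1/2) and every q ≥ 0 with ∫_{−q}^{q} ρ(λ|q)dλ = m, one has (c/ζ)·(1/2 − m) ≤ ρ(q) ≤ (C/ζ)·(1/2 − m). -/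
open MeasureTheory Filter
open scoped Real BigOperators

noncomputable section

namespace BetheSix

/-! ### Kernels in the regime `-1 < Δ < 1` (`Δ = -cos ζ`, `ζ ∈ (0,π)`) -/

def Kml (ζ x : ℝ) : ℝ := Real.sin (2 * ζ) / (2 * π * (Real.sinh x ^ 2 + Real.sin ζ ^ 2))

def xiMl (ζ x : ℝ) : ℝ := Real.sin ζ / (2 * π * (Real.sinh x ^ 2 + Real.sin (ζ / 2) ^ 2))

/-- the momentum `p(x) = 2π ∫₀ˣ ξ`. -/
def pMl (ζ x : ℝ) : ℝ := 2 * π * ∫ t in (0 : ℝ)..x, xiMl ζ t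

/-- the phase `ϑ(x) = 2π ∫₀ˣ K`. -/
def thMl (ζ x : ℝ) : ℝ := 2 * π * ∫ t in (0 : ℝ)..x, Kml ζ t

/-- the explicit density `ρ(x) = ρ(x|∞) = 1/(2ζ cosh(πx/ζ))`. -/
def rhoInf (ζ x : ℝ) : ℝ := 1 / (2 * ζ * Real.cosh (π * x / ζ))

/-- `g` is the solution `ρ(·|q)` of the continuum Bethe equation in the regime
`-1 < Δ < 1`: `g ∈ L¹(ℝ) ∩ L^∞(ℝ)` and `g(λ) + ∫_{-q}^q K(λ-μ) g(μ) dμ = ξ(λ)`. -/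
def IsBEml (ζ q : ℝ) (g : ℝ → ℝ) : Prop :=
  Integrable g ∧ MemLp g ⊤ ∧
    ∀ l : ℝ, g l + ∫ m in (-q)..q, Kml ζ (l - m) * g m = xiMl ζ l

/-! ### Kernels in the regime `Δ < -1` (`Δ = -cosh ζ`, `ζ > 0`) -/

def Kms (ζ x : ℝ) : ℝ := Real.sinh (2 * ζ) / (2 * π * (Real.sin x ^ 2 + Real.sinh ζ ^ 2))

def xiMs (ζ x : ℝ) : ℝ := Real.sinh ζ / (2 * π * (Real.sin x ^ 2 + Real.sinh (ζ / 2) ^ 2))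

def pMs (ζ x : ℝ) : ℝ := 2 * π * ∫ t in (0 : ℝ)..x, xiMs ζ t

def thMs (ζ x : ℝ) : ℝ := 2 * π * ∫ t in (0 : ℝ)..x, Kms ζ t

/-- the explicit `π`-periodic density `ρ(x) = (1/(2ζ)) Σ_{n∈ℤ} 1/cosh(π(πn-x)/ζ)`. -/
def rhoMs (ζ x : ℝ) : ℝ := (1 / (2 * ζ)) * ∑' n : ℤ, 1 / Real.cosh (π * (π * n - x) / ζ)

/-- `g` is the continuous solution `ρ(·|q)` of the continuum Bethe equation in the
regime `Δ < -1`. -/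
def IsBEms (ζ q : ℝ) (g : ℝ → ℝ) : Prop :=
  Continuous g ∧
    ∀ l : ℝ, g l + ∫ m in (-q)..q, Kms ζ (l - m) * g m = xiMs ζ l

/-- In the regime `-1 < Δ < 1` the parameter `𝔮` ranges over `[0,∞]`.  The pair
`(S, g)` encodes the interval `[-𝔮, 𝔮]` together with the density `ρ(·|𝔮)`:
either `𝔮 = q` is finite, `S = [-q,q]` and `g = ρ(·|q)` solves the continuum Bethe
equation, or `𝔮 = ∞`, `S = ℝ` and `g = ρ(·|∞)` is the explicit density. -/
def QDomainMl (ζ : ℝ) (S : Set ℝ) (g : ℝ → ℝ) : Prop :=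
  (∃ q : ℝ, 0 ≤ q ∧ S = Set.Icc (-q) q ∧ IsBEml ζ q g) ∨
  (S = Set.univ ∧ g = rhoInf ζ)

/-! ### The logarithmic Bethe equations -/

/-- `lam` solves the logarithmic Bethe equations
`(N/2π) p(λᵢ) - (1/2π) Σⱼ ϑ(λᵢ - λⱼ) = Iᵢ` with `Iᵢ = i - (n+1)/2` (`i` is 1-based). -/
def BetheEq (p th : ℝ → ℝ) (N n : ℕ) (lam : Fin n → ℝ) : Prop :=
  ∀ i : Fin n,
    ((N : ℝ) / (2 * π)) * p (lam i) - (1 / (2 * π)) * ∑ j, th (lam i - lam j)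
      = ((i.1 : ℝ) + 1) - ((n : ℝ) + 1) / 2

/-- `λ_{n+1-i} = -λ_i` for all `i` (1-based indices). -/
def SymmetricVec {n : ℕ} (lam : Fin n → ℝ) : Prop :=
  ∀ i : Fin n, lam ⟨n - 1 - i.1, by have := i.2; omega⟩ = -lam i

/-- `λ₁ < λ₂ < ⋯ < λ_n`. -/
def StrictOrderedVec {n : ℕ} (lam : Fin n → ℝ) : Prop :=
  ∀ i j : Fin n, i < j → lam i < lam j

/-- the cumulative function `G(y) = ∫₀^y g`. Since the densities `ρ(·|q)` are
positive, `G` is strictly increasing, and the quantile `Λ(x|q)` (with the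
conventions `Λ(x|q) = ±∞` outside the range) satisfies, for every `y ∈ ℝ`:
`Λ(x|q) ≤ y ↔ (x-(n+1)/2)/N ≤ G(y)` and `y ≤ Λ(x|q) ↔ G(y) ≤ (x-(n+1)/2)/N`. -/
def GG (g : ℝ → ℝ) (y : ℝ) : ℝ := ∫ t in (0 : ℝ)..y, g t

/-- `lam` is `(k,q)`-interlaced with respect to the density `g = ρ(·|q)`:
`Λ(i - k/2 | q) ≤ λ_i ≤ Λ(i + k/2 | q)` for all `i` (1-based), expressed through
the cumulative function `G` to accommodate the conventions `Λ = ±∞`. -/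
def Interlaced (N n k : ℕ) (g : ℝ → ℝ) (lam : Fin n → ℝ) : Prop :=
  ∀ i : Fin n,
    (((i.1 : ℝ) + 1) - (k : ℝ) / 2 - ((n : ℝ) + 1) / 2) / N ≤ GG g (lam i) ∧
    GG g (lam i) ≤ (((i.1 : ℝ) + 1) + (k : ℝ) / 2 - ((n : ℝ) + 1) / 2) / N

end BetheSix

namespace BetheSix

/-! ### The Poisson kernel of the strip -/

/-- basic kernel -/
def uk (a y : ℝ) : ℝ := Real.sin a / (Real.cosh y - Real.cos a)
def uk1 (a y : ℝ) : ℝ := (Real.cos a * Real.cosh y - 1) / (Real.cosh y - Real.cos a) ^ 2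
def uk2 (a y : ℝ) : ℝ :=
  Real.sin a * (2 - Real.cosh y ^ 2 - Real.cos a * Real.cosh y) / (Real.cosh y - Real.cos a) ^ 3

lemma den_bound {a c y : ℝ} (hc0 : 0 ≤ c) (hac : Real.cos a ≤ c) :
    (1 - c) * Real.cosh y ≤ Real.cosh y - Real.cos a := by
  nlinarith [Real.one_le_cosh y]

lemma den_pos {a : ℝ} (ha : Real.cos a < 1) (y : ℝ) : 0 < Real.cosh y - Real.cos a := by
  linarith [Real.one_le_cosh y]

lemma inv_cosh_le (y : ℝ) : (Real.cosh y)⁻¹ ≤ 2 * (1 + y ^ 2)⁻¹ := by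
  have h : 1 + y ^ 2 / 2 ≤ Real.cosh y := by
    have h1 := Real.cosh_sq' (y / 2)
    have h2 : Real.cosh y = Real.cosh (y/2) ^ 2 + Real.sinh (y/2) ^ 2 := by
      rw [← Real.cosh_two_mul]; ring_nf
    have h3 : (y/2)^2 ≤ Real.sinh (y/2) ^ 2 := by
      rw [sq_le_sq]
      rw [Real.abs_sinh]
      exact Real.self_le_sinh_iff.2 (abs_nonneg _)
    nlinarith
  have hc := Real.cosh_pos y
  rw [← div_eq_mul_inv, inv_eq_one_div, div_le_div_iff₀ hc (by positivity)]
  nlinarith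

lemma integrable_inv_cosh : Integrable (fun y : ℝ => (Real.cosh y)⁻¹) := by
  refine (integrable_inv_one_add_sq.const_mul 2).mono' ?_ ?_
  · exact (Real.continuous_cosh.inv₀ (fun y => (Real.cosh_pos y).ne')).aestronglyMeasurable
  · filter_upwards with y
    rw [Real.norm_of_nonneg (by positivity)]
    exact inv_cosh_le y

lemma abs_div_le_aux {n D k N C : ℝ} (hD : k * C ≤ D) (hk : 0 < k) (hC : 0 < C) (p : ℕ)
    (hn : |n| ≤ N * C ^ p) : |n / D ^ (p + 1)| ≤ N / k ^ (p + 1) * C⁻¹ := by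
  have hkC : 0 < k * C := mul_pos hk hC
  have hD0 : 0 < D := lt_of_lt_of_le hkC hD
  have hN : 0 ≤ N * C ^ p := le_trans (abs_nonneg _) hn
  rw [abs_div, abs_of_pos (pow_pos hD0 _)]
  calc |n| / D ^ (p+1) ≤ (N * C ^ p) / (k * C) ^ (p+1) := by
        gcongr
    _ = _ := by
        rw [mul_pow, pow_succ C]
        field_simp

lemma uk_bound {a c y : ℝ} (hc0 : 0 ≤ c) (hc1 : c < 1) (hac : Real.cos a ≤ c) :
    |uk a y| ≤ 1 / (1 - c) * (Real.cosh y)⁻¹ := by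
  have := abs_div_le_aux (n := Real.sin a) (N := 1) (den_bound (y := y) hc0 hac) (by linarith)
    (Real.cosh_pos y) 0 (by simpa using Real.abs_sin_le_one a)
  simpa [uk] using this

lemma uk1_bound {a c y : ℝ} (hc0 : 0 ≤ c) (hc1 : c < 1) (hac : Real.cos a ≤ c) :
    |uk1 a y| ≤ 2 / (1 - c) ^ 2 * (Real.cosh y)⁻¹ := by
  refine abs_div_le_aux (N := 2) (den_bound (y := y) hc0 hac) (by linarith)
    (Real.cosh_pos y) 1 ?_
  have h1 := Real.one_le_cosh y
  rw [abs_le]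
  constructor <;> nlinarith [Real.neg_one_le_cos a, Real.cos_le_one a]

lemma uk2_bound {a c y : ℝ} (hc0 : 0 ≤ c) (hc1 : c < 1) (hac : Real.cos a ≤ c) :
    |uk2 a y| ≤ 4 / (1 - c) ^ 3 * (Real.cosh y)⁻¹ := by
  refine abs_div_le_aux (N := 4) (den_bound (y := y) hc0 hac) (by linarith)
    (Real.cosh_pos y) 2 ?_
  have h1 := Real.one_le_cosh y
  rw [abs_mul]
  have h2 : |2 - Real.cosh y ^ 2 - Real.cos a * Real.cosh y| ≤ 4 * Real.cosh y ^ 2 := by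
    rw [abs_le]
    constructor <;> nlinarith [Real.neg_one_le_cos a, Real.cos_le_one a]
  calc _ ≤ 1 * (4 * Real.cosh y ^ 2) := by
        gcongr
        exact Real.abs_sin_le_one a
    _ = _ := by ring

lemma cont_den_inv {a : ℝ} (ha : Real.cos a < 1) : Continuous (fun y => uk a y) := by
  unfold uk
  exact continuous_const.div (by fun_prop) (fun y => (den_pos ha y).ne')

lemma cont_uk1 {a : ℝ} (ha : Real.cos a < 1) : Continuous (fun y => uk1 a y) := by
  unfold uk1
  exact Continuous.div (by fun_prop) (by fun_prop) (fun y => (pow_pos (den_pos ha y) _).ne')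

lemma cont_uk2 {a : ℝ} (ha : Real.cos a < 1) : Continuous (fun y => uk2 a y) := by
  unfold uk2
  exact Continuous.div (by fun_prop) (by fun_prop) (fun y => (pow_pos (den_pos ha y) _).ne')

/-- midpoint constant -/
def cm (a : ℝ) : ℝ := (1 + Real.cos a) / 2

lemma cm_nonneg (a : ℝ) : 0 ≤ cm a := by
  unfold cm; linarith [Real.neg_one_le_cos a]
lemma cm_lt {a : ℝ} (ha : Real.cos a < 1) : cm a < 1 := by
  unfold cm; linarith
lemma lt_cm {a : ℝ} (ha : Real.cos a < 1) : Real.cos a < cm a := by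
  unfold cm; linarith

lemma integrable_of_cosh_bound {f : ℝ → ℝ} {B : ℝ} (hf : Continuous f)
    (hB : ∀ y, |f y| ≤ B * (Real.cosh y)⁻¹) : Integrable f :=
  (integrable_inv_cosh.const_mul B).mono' hf.aestronglyMeasurable
    (Filter.Eventually.of_forall hB)

lemma mul_cos_bound {f B w : ℝ} {g : ℝ} (h : |f| ≤ B * g) : |f * Real.cos w| ≤ B * g := by
  rw [abs_mul]
  nlinarith [Real.abs_cos_le_one w, abs_nonneg f]

lemma integrable_uk {a : ℝ} (ha : Real.cos a < 1) : Integrable (uk a) :=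
  integrable_of_cosh_bound (cont_den_inv ha)
    (fun _ => uk_bound (cm_nonneg a) (cm_lt ha) (lt_cm ha).le)

lemma hasDerivAt_uk {a : ℝ} (ha : Real.cos a < 1) (y : ℝ) :
    HasDerivAt (fun b => uk b y) (uk1 a y) a := by
  have hD := den_pos ha y
  have h := (Real.hasDerivAt_sin a).div ((Real.hasDerivAt_cos a).const_sub (Real.cosh y)) hD.ne'
  convert! h using 1
  unfold uk1
  congr 1
  nlinarith [Real.sin_sq_add_cos_sq a]

lemma hasDerivAt_uk1 {a : ℝ} (ha : Real.cos a < 1) (y : ℝ) :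
    HasDerivAt (fun b => uk1 b y) (uk2 a y) a := by
  have hD := den_pos ha y
  have h := (((Real.hasDerivAt_cos a).mul_const (Real.cosh y)).sub_const 1).div
    (((Real.hasDerivAt_cos a).const_sub (Real.cosh y)).pow 2) (pow_pos hD 2).ne'
  convert! h using 1
  unfold uk2
  simp only [Pi.pow_apply]
  field_simp
  push_cast
  ring

/-- cosine transform -/
def FF (w a : ℝ) : ℝ := ∫ y, uk a y * Real.cos (w * y)
def FF1 (w a : ℝ) : ℝ := ∫ y, uk1 a y * Real.cos (w * y)

lemma cos_nhds {a : ℝ} (ha : Real.cos a < 1) : {b | Real.cos b < cm a} ∈ nhds a :=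
  Real.continuous_cos.continuousAt.eventually_lt continuousAt_const (lt_cm ha)

lemma hasDerivAt_FF (w : ℝ) {a : ℝ} (ha : Real.cos a < 1) :
    HasDerivAt (FF w) (FF1 w a) a := by
  have hn := cos_nhds ha
  refine (hasDerivAt_integral_of_dominated_loc_of_deriv_le (μ := volume)
    (F := fun b y => uk b y * Real.cos (w * y)) (F' := fun b y => uk1 b y * Real.cos (w * y))
    (bound := fun y => 2 / (1 - cm a) ^ 2 * (Real.cosh y)⁻¹) hn ?_ ?_ ?_ ?_ ?_ ?_).2
  · filter_upwards [hn] with b hb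
    have : Real.cos b < 1 := lt_trans hb (cm_lt ha)
    exact ((cont_den_inv this).mul (by fun_prop)).aestronglyMeasurable
  · exact integrable_of_cosh_bound ((cont_den_inv ha).mul (by fun_prop))
      (fun y => mul_cos_bound (uk_bound (cm_nonneg a) (cm_lt ha) (lt_cm ha).le))
  · exact ((cont_uk1 ha).mul (by fun_prop)).aestronglyMeasurable
  · filter_upwards with y b hb
    exact mul_cos_bound (uk1_bound (cm_nonneg a) (cm_lt ha) (le_of_lt hb))
  · exact integrable_inv_cosh.const_mul _
  · filter_upwards with y b hb
    exact (hasDerivAt_uk (lt_trans hb (cm_lt ha)) y).mul_const _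

lemma hasDerivAt_FF1' (w : ℝ) {a : ℝ} (ha : Real.cos a < 1) :
    HasDerivAt (FF1 w) (∫ y, uk2 a y * Real.cos (w * y)) a := by
  have hn := cos_nhds ha
  refine (hasDerivAt_integral_of_dominated_loc_of_deriv_le (μ := volume)
    (F := fun b y => uk1 b y * Real.cos (w * y)) (F' := fun b y => uk2 b y * Real.cos (w * y))
    (bound := fun y => 4 / (1 - cm a) ^ 3 * (Real.cosh y)⁻¹) hn ?_ ?_ ?_ ?_ ?_ ?_).2
  · filter_upwards [hn] with b hb
    have : Real.cos b < 1 := lt_trans hb (cm_lt ha)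
    exact ((cont_uk1 this).mul (by fun_prop)).aestronglyMeasurable
  · exact integrable_of_cosh_bound ((cont_uk1 ha).mul (by fun_prop))
      (fun y => mul_cos_bound (uk1_bound (cm_nonneg a) (cm_lt ha) (lt_cm ha).le))
  · exact ((cont_uk2 ha).mul (by fun_prop)).aestronglyMeasurable
  · filter_upwards with y b hb
    exact mul_cos_bound (uk2_bound (cm_nonneg a) (cm_lt ha) (le_of_lt hb))
  · exact integrable_inv_cosh.const_mul _
  · filter_upwards with y b hb
    exact (hasDerivAt_uk1 (lt_trans hb (cm_lt ha)) y).mul_const _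

lemma tendsto_inv_cosh_cocompact {f : ℝ → ℝ} {B : ℝ} (h : ∀ y, |f y| ≤ B * (Real.cosh y)⁻¹) :
    Tendsto f atTop (nhds 0) ∧ Tendsto f atBot (nhds 0) := by
  have hB : 0 ≤ B := by
    have := h 0
    simp at this
    exact le_trans (abs_nonneg _) this
  have hle : ∀ y, |f y| ≤ B * (2 * (1 + y ^ 2)⁻¹) := fun y =>
    (h y).trans (mul_le_mul_of_nonneg_left (inv_cosh_le y) hB)
  have key : ∀ l : Filter ℝ, Tendsto (fun y : ℝ => y ^ 2) l atTop → Tendsto f l (nhds 0) := by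
    intro l hl
    refine squeeze_zero_norm hle ?_
    have h1 : Tendsto (fun y : ℝ => (1 + y ^ 2)⁻¹) l (nhds 0) :=
      tendsto_inv_atTop_zero.comp (tendsto_atTop_add_const_left _ _ hl)
    simpa using (h1.const_mul 2).const_mul B
  refine ⟨key _ (tendsto_pow_atTop two_ne_zero), key _ ?_⟩
  have := (tendsto_pow_atTop (α := ℝ) two_ne_zero).comp tendsto_abs_atBot_atTop
  simpa [Function.comp_def] using this

lemma FF2_eq (w : ℝ) {a : ℝ} (ha : Real.cos a < 1) :
    ∫ y, uk2 a y * Real.cos (w * y) = w ^ 2 * FF w a := by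
  set c := cm a with hc
  have hc0 := cm_nonneg a
  have hc1 := cm_lt ha
  have hac := (lt_cm ha).le
  let f : ℝ → ℝ := fun y => - Real.sin a * Real.sinh y / (Real.cosh y - Real.cos a) ^ 2
      * Real.cos (w * y) + w * (uk a y * Real.sin (w * y))
  let f' : ℝ → ℝ := fun y => w ^ 2 * (uk a y * Real.cos (w * y)) - uk2 a y * Real.cos (w * y)
  have hd : ∀ y, HasDerivAt f (f' y) y := by
    intro y
    have hD := den_pos ha y
    have hw : HasDerivAt (fun y => w * y) w y := by simpa using (hasDerivAt_id y).const_mul w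
    have h1 := (((Real.hasDerivAt_sinh y).const_mul (- Real.sin a)).div
      (((Real.hasDerivAt_cosh y).sub_const (Real.cos a)).pow 2) (pow_pos hD 2).ne').mul hw.cos
    have h2 := ((((Real.hasDerivAt_cosh y).sub_const (Real.cos a)).inv hD.ne').const_mul
      (Real.sin a)).mul hw.sin
    have h3 := h1.add (h2.const_mul w)
    convert! h3 using 1
    simp only [f', uk, uk2]
    have hs : Real.sinh y ^ 2 = Real.cosh y ^ 2 - 1 := Real.sinh_sq y
    simp only [Pi.pow_apply, Pi.inv_apply, Pi.div_apply]
    field_simp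
    push_cast
    simp only [hs]
    ring
  have hi1 : Integrable (fun y => uk a y * Real.cos (w * y)) :=
    integrable_of_cosh_bound ((cont_den_inv ha).mul (by fun_prop))
      (fun y => mul_cos_bound (uk_bound hc0 hc1 hac))
  have hi2 : Integrable (fun y => uk2 a y * Real.cos (w * y)) :=
    integrable_of_cosh_bound ((cont_uk2 ha).mul (by fun_prop))
      (fun y => mul_cos_bound (uk2_bound hc0 hc1 hac))
  have hb : ∀ y, |f y| ≤ (1 / (1 - c) ^ 2 + |w| * (1 / (1 - c))) * (Real.cosh y)⁻¹ := by
    intro y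
    have h1 : |- Real.sin a * Real.sinh y / (Real.cosh y - Real.cos a) ^ 2| ≤
        1 / (1 - c) ^ 2 * (Real.cosh y)⁻¹ := by
      refine abs_div_le_aux (N := 1) (den_bound (y := y) hc0 hac) (by linarith)
        (Real.cosh_pos y) 1 ?_
      rw [abs_mul, abs_neg]
      have : |Real.sinh y| ≤ Real.cosh y := by
        rw [Real.abs_sinh, ← Real.cosh_abs]; exact (Real.sinh_lt_cosh _).le
      calc _ ≤ 1 * Real.cosh y := by
            gcongr
            exact Real.abs_sin_le_one a
        _ = _ := by ring
    have h2 : |uk a y * Real.sin (w * y)| ≤ 1 / (1 - c) * (Real.cosh y)⁻¹ := by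
      rw [abs_mul]
      have := uk_bound (y := y) hc0 hc1 hac
      nlinarith [Real.abs_sin_le_one (w * y), abs_nonneg (uk a y)]
    calc |f y| ≤ _ + _ := abs_add_le _ _
      _ ≤ 1 / (1 - c) ^ 2 * (Real.cosh y)⁻¹ + |w| * (1 / (1 - c) * (Real.cosh y)⁻¹) := by
        refine add_le_add (mul_cos_bound h1) ?_
        rw [abs_mul]
        gcongr
      _ = _ := by ring
  obtain ⟨ht, hbot⟩ := tendsto_inv_cosh_cocompact hb
  have := integral_of_hasDerivAt_of_tendsto hd ((hi1.const_mul _).sub hi2) hbot ht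
  simp only [f'] at this
  rw [integral_sub (hi1.const_mul _) hi2, integral_const_mul] at this
  unfold FF
  linarith

lemma hasDerivAt_FF1 (w : ℝ) {a : ℝ} (ha : Real.cos a < 1) :
    HasDerivAt (FF1 w) (w ^ 2 * FF w a) a := by
  rw [← FF2_eq w ha]; exact hasDerivAt_FF1' w ha

lemma cos_lt_one_of_mem {a : ℝ} (h0 : 0 < a) (h2 : a < 2 * π) : Real.cos a < 1 := by
  refine lt_of_le_of_ne (Real.cos_le_one a) fun h => ?_
  have := (Real.cos_eq_one_iff_of_lt_of_lt (by linarith [Real.pi_pos]) h2).1 h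
  linarith

lemma integral_uk {a : ℝ} (h0 : 0 < a) (hpi : a ≤ π) : ∫ y, uk a y = 2 * (π - a) := by
  rcases hpi.lt_or_eq with hlt | rfl
  swap
  · simp [uk]
  have hs : 0 < Real.sin a := Real.sin_pos_of_pos_of_lt_pi h0 hlt
  have hc : Real.cos a < 1 := cos_lt_one_of_mem h0 (by linarith)
  have hd : ∀ y, HasDerivAt (fun y => 2 * Real.arctan ((Real.exp y - Real.cos a) / Real.sin a))
      (uk a y) y := by
    intro y
    have h := ((((Real.hasDerivAt_exp y).sub_const (Real.cos a)).div_const (Real.sin a)).arctan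
      ).const_mul 2
    convert! h using 1
    unfold uk
    have hD := den_pos hc y
    have he := Real.exp_pos y
    rw [Real.cosh_eq, Real.exp_neg] at hD ⊢
    have hs2 : Real.sin a ^ 2 = 1 - Real.cos a ^ 2 := by
      linarith [Real.sin_sq_add_cos_sq a]
    have h3 : Real.exp y ^ 2 + 1 - 2 * Real.exp y * Real.cos a ≠ 0 := by
      intro h3
      have h4 : (Real.exp y + (Real.exp y)⁻¹) / 2 - Real.cos a = 0 := by
        field_simp
        linarith
      linarith
    have h5 : Real.sin a ^ 2 + (Real.exp y - Real.cos a) ^ 2 ≠ 0 := by positivity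
    have e1 : 1 + ((Real.exp y - Real.cos a) / Real.sin a) ^ 2 =
       (Real.sin a ^ 2 + (Real.exp y - Real.cos a) ^ 2) / Real.sin a ^ 2 := by
      field_simp
    have e2 : (Real.exp y + (Real.exp y)⁻¹) / 2 - Real.cos a =
       (Real.sin a ^ 2 + (Real.exp y - Real.cos a) ^ 2) / (2 * Real.exp y) := by
      field_simp
      rw [hs2]; ring
    rw [e1, e2]
    field_simp
  have ht : Tendsto (fun y => 2 * Real.arctan ((Real.exp y - Real.cos a) / Real.sin a)) atTop
      (nhds (2 * (π / 2))) := by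
    refine Tendsto.const_mul 2 ?_
    refine (tendsto_nhds_of_tendsto_nhdsWithin Real.tendsto_arctan_atTop).comp ?_
    refine Tendsto.atTop_div_const hs ?_
    exact tendsto_atTop_add_const_right _ _ Real.tendsto_exp_atTop
  have hb : Tendsto (fun y => 2 * Real.arctan ((Real.exp y - Real.cos a) / Real.sin a)) atBot
      (nhds (2 * (a - π / 2))) := by
    refine Tendsto.const_mul 2 ?_
    have h1 : a - π / 2 = Real.arctan ((0 - Real.cos a) / Real.sin a) := by
      rw [← Real.arctan_tan (x := a - π / 2) (by linarith) (by linarith), Real.tan_eq_sin_div_cos,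
        Real.sin_sub_pi_div_two, Real.cos_sub_pi_div_two, zero_sub]
    rw [h1]
    refine (Real.continuous_arctan.tendsto _).comp ?_
    exact (Real.tendsto_exp_atBot.sub_const _).div_const _
  rw [integral_of_hasDerivAt_of_tendsto hd (integrable_uk hc) hb ht]
  ring

lemma cosh_sub_one_ge (y : ℝ) : y ^ 2 * (1 + y ^ 2) ≤ 32 * (Real.cosh y - 1) := by
  have h2 : Real.cosh y = 1 + 8 * Real.sinh (y/4) ^ 2 * (1 + Real.sinh (y/4)^2) := by
    have e : y = 2 * (2 * (y/4)) := by ring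
    conv_lhs => rw [e, Real.cosh_two_mul, Real.sinh_two_mul, Real.cosh_two_mul]
    have := Real.cosh_sq (y/4)
    rw [mul_pow, mul_pow, this]
    ring
  have h3 : (y/4)^2 ≤ Real.sinh (y/4) ^ 2 := by
    rw [sq_le_sq, Real.abs_sinh]
    exact Real.self_le_sinh_iff.2 (abs_nonneg _)
  rw [h2]
  have : (y/4)^2 * (1 + (y/4)^2) ≤ Real.sinh (y/4) ^ 2 * (1 + Real.sinh (y/4)^2) := by
    gcongr
  nlinarith [sq_nonneg y]

lemma FF_sub_le (w : ℝ) {a : ℝ} (h0 : 0 < a) (hpi : a < π) :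
    |FF w a - 2 * (π - a)| ≤ Real.sin a * (16 * w ^ 2 * π) := by
  have hs : 0 < Real.sin a := Real.sin_pos_of_pos_of_lt_pi h0 hpi
  have hc : Real.cos a < 1 := cos_lt_one_of_mem h0 (by linarith)
  have hi1 : Integrable (fun y => uk a y * Real.cos (w * y)) :=
    integrable_of_cosh_bound ((cont_den_inv hc).mul (by fun_prop))
      (fun y => mul_cos_bound (uk_bound (cm_nonneg a) (cm_lt hc) (lt_cm hc).le))
  rw [← integral_uk h0 hpi.le]
  unfold FF
  rw [← integral_sub hi1 (integrable_uk hc)]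
  have : Real.sin a * (16 * w ^ 2 * π) = ∫ y : ℝ, Real.sin a * (16 * w ^ 2) * (1 + y ^ 2)⁻¹ := by
    rw [integral_const_mul, integral_univ_inv_one_add_sq]; ring
  rw [this, ← Real.norm_eq_abs]
  refine norm_integral_le_of_norm_le (integrable_inv_one_add_sq.const_mul _) ?_
  have hae : ∀ᵐ y : ℝ, y ≠ 0 := by
    simp [ae_iff]
  filter_upwards [hae] with y hy0
  have hD := den_pos hc y
  have h1 : 1 - Real.cos (w * y) ≤ (w * y) ^ 2 / 2 := by
    linarith [Real.one_sub_sq_div_two_le_cos (x := w * y)]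
  have h2 := cosh_sub_one_ge y
  have h3 := Real.cos_le_one (w * y)
  rw [show uk a y * Real.cos (w * y) - uk a y = - (uk a y * (1 - Real.cos (w * y))) by ring,
    norm_neg, Real.norm_of_nonneg (mul_nonneg (by unfold uk; positivity) (by linarith))]
  unfold uk
  rw [← div_eq_mul_inv, div_mul_eq_mul_div, div_le_div_iff₀ hD (by positivity)]
  rw [mul_assoc, mul_assoc, mul_assoc]
  refine mul_le_mul_of_nonneg_left ?_ hs.le
  calc (1 - Real.cos (w * y)) * (1 + y ^ 2) ≤ ((w * y) ^ 2 / 2) * (1 + y ^ 2) := by gcongr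
    _ = w ^ 2 / 2 * (y ^ 2 * (1 + y ^ 2)) := by ring
    _ ≤ w ^ 2 / 2 * (32 * (Real.cosh y - 1)) := by gcongr
    _ ≤ w ^ 2 / 2 * (32 * (Real.cosh y - Real.cos a)) := by
      gcongr
    _ = _ := by ring

lemma FF_tendsto (w : ℝ) : Tendsto (FF w) (nhdsWithin 0 (Set.Ioi 0)) (nhds (2 * π)) := by
  have h1 : Tendsto (fun a => FF w a - 2 * (π - a)) (nhdsWithin 0 (Set.Ioi 0)) (nhds 0) := by
    refine squeeze_zero_norm' (a := fun a => Real.sin a * (16 * w ^ 2 * π)) ?_ ?_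
    · filter_upwards [Ioo_mem_nhdsGT Real.pi_pos] with a ha
      exact FF_sub_le w ha.1 ha.2
    · have : Continuous (fun a => Real.sin a * (16 * w ^ 2 * π)) := by fun_prop
      have := this.tendsto 0
      simp only [Real.sin_zero, zero_mul] at this
      exact this.mono_left nhdsWithin_le_nhds
  have h2 : Tendsto (fun a : ℝ => 2 * (π - a)) (nhdsWithin 0 (Set.Ioi 0)) (nhds (2 * π)) := by
    have : Continuous (fun a : ℝ => 2 * (π - a)) := by fun_prop
    have := this.tendsto 0
    simp only [sub_zero] at this
    exact this.mono_left nhdsWithin_le_nhds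
  simpa using h1.add h2

lemma FF_ode (w : ℝ) {a : ℝ} (h0 : 0 < a) (h2 : a < 2 * π) :
    w * FF w a = FF1 w π * Real.sinh (w * (a - π)) := by
  have hpi := Real.pi_pos
  have hFpi : FF w π = 0 := by simp [FF, uk]
  have key : ∀ s : ℝ, s ^ 2 = w ^ 2 →
      (FF1 w a + s * FF w a) * Real.exp (-s * a) = FF1 w π * Real.exp (-s * π) := by
    intro s hs
    let f : ℝ → ℝ := fun a => (FF1 w a + s * FF w a) * Real.exp (-s * a)
    have hd : ∀ b ∈ Set.Ioo 0 (2 * π), HasDerivAt f 0 b := by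
      intro b hb
      have hc := cos_lt_one_of_mem hb.1 hb.2
      have h1 := ((hasDerivAt_FF1 w hc).add ((hasDerivAt_FF w hc).const_mul s))
      have h2 : HasDerivAt (fun b => Real.exp (-s * b)) (Real.exp (-s * b) * (-s)) b := by
        have := ((hasDerivAt_id b).const_mul (-s)).exp
        simpa using this
      have h3 := h1.mul h2
      convert! h3 using 1
      simp only [Pi.add_apply]
      rw [← hs]
      ring
    have := isOpen_Ioo.is_const_of_deriv_eq_zero (f := f) (isPreconnected_Ioo)
      (fun b hb => (hd b hb).differentiableAt.differentiableWithinAt)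
      (fun b hb => (hd b hb).deriv) (x := a) (y := π) ⟨h0, h2⟩ ⟨hpi, by linarith⟩
    simpa [f, hFpi] using this
  have k1 := key w rfl
  have k2 := key (-w) (by ring)
  have e1 : FF1 w a + w * FF w a = FF1 w π * Real.exp (w * (a - π)) := by
    have : Real.exp (w * (a - π)) = Real.exp (-w * π) * Real.exp (w * a) := by
      rw [← Real.exp_add]; ring_nf
    rw [this, ← mul_assoc, ← k1, mul_assoc, ← Real.exp_add]
    simp
  have e2 : FF1 w a - w * FF w a = FF1 w π * Real.exp (-(w * (a - π))) := by
    have : Real.exp (-(w * (a - π))) = Real.exp (- -w * π) * Real.exp (-w * a) := by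
      rw [← Real.exp_add]; ring_nf
    rw [this, ← mul_assoc, ← k2, mul_assoc, ← Real.exp_add]
    simp [sub_eq_add_neg]
  rw [Real.sinh_eq]
  linear_combination (e1 - e2) / 2

lemma FF_formula {w : ℝ} (hw : w ≠ 0) {a : ℝ} (h0 : 0 < a) (h2 : a < 2 * π) :
    FF w a * Real.sinh (π * w) = 2 * π * Real.sinh ((π - a) * w) := by
  have hpi := Real.pi_pos
  have hlim1 : Tendsto (fun a => w * FF w a) (nhdsWithin 0 (Set.Ioi 0)) (nhds (w * (2 * π))) :=
    (FF_tendsto w).const_mul w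
  have hlim2 : Tendsto (fun a => w * FF w a) (nhdsWithin 0 (Set.Ioi 0))
      (nhds (FF1 w π * Real.sinh (w * (0 - π)))) := by
    have : Continuous (fun a => FF1 w π * Real.sinh (w * (a - π))) := by fun_prop
    refine ((this.tendsto 0).mono_left nhdsWithin_le_nhds).congr' ?_
    filter_upwards [Ioo_mem_nhdsGT (show (0:ℝ) < 2 * π by linarith)] with b hb
    exact (FF_ode w hb.1 hb.2).symm
  have e := tendsto_nhds_unique hlim1 hlim2
  have e2 := FF_ode w h0 h2
  have s1 : Real.sinh (w * (0 - π)) = - Real.sinh (π * w) := by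
    rw [← Real.sinh_neg]; ring_nf
  have s2 : Real.sinh (w * (a - π)) = - Real.sinh ((π - a) * w) := by
    rw [← Real.sinh_neg]; ring_nf
  rw [s1] at e
  rw [s2] at e2
  apply mul_left_cancel₀ hw
  linear_combination Real.sinh (π * w) * e2 - Real.sinh ((π - a) * w) * e

lemma FF_zero {a : ℝ} (h0 : 0 < a) (hpi : a ≤ π) : FF 0 a = 2 * (π - a) := by
  rw [← integral_uk h0 hpi]; simp [FF]

/-! ### Fourier transforms -/

open scoped FourierTransform Convolution

lemma fourier_even {k : ℝ → ℝ} (hk : Integrable k) (he : ∀ x, k (-x) = k x) (w : ℝ) :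
    𝓕 (fun x => (k x : ℂ)) w = ((∫ x, k x * Real.cos (2 * π * w * x) : ℝ) : ℂ) := by
  rw [Real.fourier_real_eq_integral_exp_smul]
  have hc : Integrable (fun x => k x * Real.cos (2 * π * w * x)) := by
    refine hk.mul_bdd (c := 1) (by fun_prop) ?_
    filter_upwards with x
    exact Real.abs_cos_le_one _
  have hs : Integrable (fun x => k x * Real.sin (2 * π * w * x)) := by
    refine hk.mul_bdd (c := 1) (by fun_prop) ?_
    filter_upwards with x
    exact Real.abs_sin_le_one _
  have h0 : ∫ x, k x * Real.sin (2 * π * w * x) = 0 := by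
    have h := integral_neg_eq_self (fun x => k x * Real.sin (2 * π * w * x)) volume
    simp only [he, mul_neg, Real.sin_neg, integral_neg] at h
    linarith
  have e : ∀ v : ℝ, Complex.exp (↑(-2 * π * v * w) * Complex.I) • (k v : ℂ) =
      ((k v * Real.cos (2 * π * w * v) : ℝ) : ℂ) -
        Complex.I * ((k v * Real.sin (2 * π * w * v) : ℝ) : ℂ) := by
    intro v
    rw [Complex.exp_mul_I, ← Complex.ofReal_cos, ← Complex.ofReal_sin,
      show -2 * π * v * w = -(2 * π * w * v) by ring, Real.cos_neg, Real.sin_neg]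
    push_cast
    rw [smul_eq_mul]
    ring
  simp_rw [e]
  rw [integral_sub hc.ofReal (hs.ofReal.const_mul _), integral_const_mul, integral_complex_ofReal,
    integral_complex_ofReal, h0]
  simp

/-- scaled kernel -/
def sk (A b a x : ℝ) : ℝ := A * uk a (b * x)

lemma uk_even (a x : ℝ) : uk a (-x) = uk a x := by simp [uk]

lemma integrable_sk (A : ℝ) {b a : ℝ} (hb : 0 < b) (ha : Real.cos a < 1) :
    Integrable (sk A b a) :=
  ((integrable_uk ha).comp_mul_left' hb.ne').const_mul A

lemma continuous_sk (A b : ℝ) {a : ℝ} (ha : Real.cos a < 1) : Continuous (sk A b a) := by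
  have := cont_den_inv ha
  exact continuous_const.mul (this.comp (by fun_prop))

lemma sk_bounded (A b : ℝ) {a : ℝ} (ha : Real.cos a < 1) : ∃ B, ∀ x, |sk A b a x| ≤ B := by
  refine ⟨|A| * (1 / (1 - cm a)), fun x => ?_⟩
  unfold sk
  rw [abs_mul]
  gcongr
  have h := uk_bound (y := b * x) (cm_nonneg a) (cm_lt ha) (lt_cm ha).le
  refine h.trans (mul_le_of_le_one_right ?_ (inv_le_one_of_one_le₀ (Real.one_le_cosh _)))
  have := cm_lt ha
  exact div_nonneg zero_le_one (by linarith)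

lemma fourier_sk (A : ℝ) {b a : ℝ} (hb : 0 < b) (ha : Real.cos a < 1) (w : ℝ) :
    𝓕 (fun x => (sk A b a x : ℂ)) w = ((A / b * FF (2 * π * w / b) a : ℝ) : ℂ) := by
  rw [fourier_even (integrable_sk A hb ha) (fun x => by simp [sk, uk_even]) w]
  congr 1
  have h := Measure.integral_comp_mul_left (fun y => uk a y * Real.cos (2 * π * w / b * y)) b
  have e : ∀ x, sk A b a x * Real.cos (2 * π * w * x) =
      A * (uk a (b * x) * Real.cos (2 * π * w / b * (b * x))) := by
    intro x
    unfold sk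
    rw [show 2 * π * w / b * (b * x) = 2 * π * w * x by field_simp]
    ring
  simp_rw [e]
  rw [integral_const_mul, h, abs_of_pos (inv_pos.2 hb), smul_eq_mul]
  unfold FF
  ring

lemma integral_sk (A : ℝ) {b a : ℝ} (hb : 0 < b) (h0 : 0 < a) (hpi : a ≤ π) :
    ∫ x, sk A b a x = A / b * (2 * (π - a)) := by
  unfold sk
  have h := Measure.integral_comp_mul_left (fun y => uk a y) b
  rw [integral_const_mul, h, abs_of_pos (inv_pos.2 hb), smul_eq_mul, integral_uk h0 hpi]
  ring

/-! ### The concrete kernels -/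

lemma Kml_eq (ζ x : ℝ) : Kml ζ x = sk (1 / π) 2 (2 * ζ) x := by
  have : Real.cosh (2 * x) - Real.cos (2 * ζ) = 2 * (Real.sinh x ^ 2 + Real.sin ζ ^ 2) := by
    rw [Real.cosh_two_mul, Real.cos_two_mul, Real.cosh_sq, Real.sin_sq]; ring
  unfold Kml sk uk
  rw [this]
  have := Real.pi_pos
  rw [div_mul_div_comm, one_mul]
  congr 1
  ring

lemma xiMl_eq (ζ x : ℝ) : xiMl ζ x = sk (1 / π) 2 ζ x := by
  have : Real.cosh (2 * x) - Real.cos ζ = 2 * (Real.sinh x ^ 2 + Real.sin (ζ / 2) ^ 2) := by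
    have h : Real.cos ζ = Real.cos (2 * (ζ / 2)) := by ring_nf
    rw [h, Real.cosh_two_mul, Real.cos_two_mul, Real.cosh_sq, Real.sin_sq]; ring
  unfold xiMl sk uk
  rw [this]
  rw [div_mul_div_comm, one_mul]
  congr 1
  ring

lemma rhoInf_eq (ζ x : ℝ) : rhoInf ζ x = sk (1 / (2 * ζ)) (π / ζ) (π / 2) x := by
  unfold rhoInf sk uk
  rw [Real.sin_pi_div_two, Real.cos_pi_div_two, sub_zero, div_mul_div_comm, one_mul,
    show π / ζ * x = π * x / ζ by ring]

/-- the auxiliary angle -/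
def aP (ζ : ℝ) : ℝ := π * ζ / (π - ζ)

/-- the auxiliary positive kernel -/
def PP (ζ x : ℝ) : ℝ := sk (1 / (π - ζ)) (2 * π / (π - ζ)) (aP ζ) x

section
variable {ζ : ℝ}

lemma aP_pos (h0 : 0 < ζ) (h1 : ζ ≤ π / 2) : 0 < aP ζ := by
  have := Real.pi_pos
  have : 0 < π - ζ := by linarith
  unfold aP; positivity

lemma aP_le (h0 : 0 < ζ) (h1 : ζ ≤ π / 2) : aP ζ ≤ π := by
  have hp := Real.pi_pos
  have : 0 < π - ζ := by linarith
  unfold aP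
  rw [div_le_iff₀ this]
  nlinarith

lemma cos_aP (h0 : 0 < ζ) (h1 : ζ ≤ π / 2) : Real.cos (aP ζ) < 1 :=
  cos_lt_one_of_mem (aP_pos h0 h1) (by linarith [aP_le h0 h1, Real.pi_pos])

lemma cos_K (h0 : 0 < ζ) (h1 : ζ ≤ π / 2) : Real.cos (2 * ζ) < 1 :=
  cos_lt_one_of_mem (by linarith) (by linarith [Real.pi_pos])

lemma cos_xi (h0 : 0 < ζ) (h1 : ζ ≤ π / 2) : Real.cos ζ < 1 :=
  cos_lt_one_of_mem (by linarith) (by linarith [Real.pi_pos])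

lemma cos_half : Real.cos (π / 2) < 1 := by simp

/-- real symbols -/
def hK (ζ w : ℝ) : ℝ := 1 / π / 2 * FF (2 * π * w / 2) (2 * ζ)
def hX (ζ w : ℝ) : ℝ := 1 / π / 2 * FF (2 * π * w / 2) ζ
def hR (ζ w : ℝ) : ℝ := 1 / (2 * ζ) / (π / ζ) * FF (2 * π * w / (π / ζ)) (π / 2)
def hP (ζ w : ℝ) : ℝ :=
  1 / (π - ζ) / (2 * π / (π - ζ)) * FF (2 * π * w / (2 * π / (π - ζ))) (aP ζ)

lemma sinh_pos_mul {c w : ℝ} (hc : 0 ≤ c) : 0 ≤ Real.sinh (c * w) * Real.sinh (π * w) := by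
  rcases le_total 0 w with h | h
  · exact mul_nonneg (Real.sinh_nonneg_iff.2 (by positivity))
      (Real.sinh_nonneg_iff.2 (by have := Real.pi_pos; positivity))
  · exact mul_nonneg_of_nonpos_of_nonpos
      (Real.sinh_nonpos_iff.2 (mul_nonpos_of_nonneg_of_nonpos hc h))
      (Real.sinh_nonpos_iff.2 (mul_nonpos_of_nonneg_of_nonpos Real.pi_pos.le h))

lemma symbols (h0 : 0 < ζ) (h1 : ζ ≤ π / 2) (w : ℝ) :
    hR ζ w * (1 + hK ζ w) = hX ζ w ∧ hK ζ w = hX ζ w * hP ζ w ∧ 0 ≤ hK ζ w := by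
  have hp := Real.pi_pos
  have hz : 0 < π - ζ := by linarith
  have ha0 := aP_pos h0 h1
  have ha1 := aP_le h0 h1
  unfold hR hK hX hP
  rw [show 2 * π * w / 2 = π * w by ring, show 2 * π * w / (π / ζ) = 2 * ζ * w by field_simp,
    show 2 * π * w / (2 * π / (π - ζ)) = (π - ζ) * w by field_simp]
  rcases eq_or_ne w 0 with rfl | hw
  · simp only [mul_zero]
    rw [FF_zero (by linarith) (by linarith), FF_zero h0 (by linarith),
      FF_zero (by linarith) (by linarith), FF_zero ha0 ha1]
    unfold aP
    refine ⟨?_, ?_, ?_⟩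
    · field_simp
      ring
    · field_simp
      ring
    · have : 0 ≤ π - 2 * ζ := by linarith
      positivity
  · have fK := FF_formula (w := π * w) (by positivity) (a := 2 * ζ) (by linarith) (by linarith)
    have fX := FF_formula (w := π * w) (by positivity) (a := ζ) (by linarith) (by linarith)
    have fR := FF_formula (w := 2 * ζ * w) (by positivity) (a := π / 2) (by linarith) (by linarith)
    have fP := FF_formula (w := (π - ζ) * w) (mul_ne_zero hz.ne' hw) ha0 (by linarith)
    rw [show (π - aP ζ) * ((π - ζ) * w) = (π - 2 * ζ) * (π * w) by
      unfold aP; field_simp; ring] at fP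
    rw [show π * ((π - ζ) * w) = (π - ζ) * (π * w) by ring] at fP
    rw [show (π - π / 2) * (2 * ζ * w) = ζ * (π * w) by ring,
      show π * (2 * ζ * w) = 2 * (ζ * (π * w)) by ring, Real.sinh_two_mul] at fR
    set v := π * w with hv
    have hv0 : v ≠ 0 := by positivity
    have s1 : Real.sinh (π * v) ≠ 0 := by
      rw [Ne, Real.sinh_eq_zero]; positivity
    have s2 : Real.sinh ((π - ζ) * v) ≠ 0 := by
      rw [Ne, Real.sinh_eq_zero]; exact mul_ne_zero hz.ne' hv0
    have s3 : Real.sinh (ζ * v) ≠ 0 := by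
      rw [Ne, Real.sinh_eq_zero]; positivity
    have c3 := (Real.cosh_pos (ζ * v)).ne'
    have eK : FF v (2 * ζ) = 2 * π * Real.sinh ((π - 2 * ζ) * v) / Real.sinh (π * v) := by
      rw [eq_div_iff s1]; exact fK
    have eX : FF v ζ = 2 * π * Real.sinh ((π - ζ) * v) / Real.sinh (π * v) := by
      rw [eq_div_iff s1]; exact fX
    have eR : FF (2 * ζ * w) (π / 2) = π / Real.cosh (ζ * v) := by
      rw [eq_div_iff c3]
      apply mul_left_cancel₀ s3
      linear_combination fR / 2
    have eP : FF ((π - ζ) * w) (aP ζ) =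
        2 * π * Real.sinh ((π - 2 * ζ) * v) / Real.sinh ((π - ζ) * v) := by
      rw [eq_div_iff s2]; exact fP
    rw [eK, eX, eR, eP]
    refine ⟨?_, ?_, ?_⟩
    · have t : Real.sinh (π * v) + Real.sinh ((π - 2 * ζ) * v) =
          2 * Real.sinh ((π - ζ) * v) * Real.cosh (ζ * v) := by
        rw [show π * v = (π - ζ) * v + ζ * v by ring,
          show (π - 2 * ζ) * v = (π - ζ) * v - ζ * v by ring, Real.sinh_add, Real.sinh_sub]
        ring
      generalize Real.sinh (π * v) = S1 at *
      generalize Real.sinh ((π - 2 * ζ) * v) = S2 at *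
      generalize Real.sinh ((π - ζ) * v) = S3 at *
      generalize Real.cosh (ζ * v) = S4 at *
      field_simp
      linear_combination t
    · generalize Real.sinh (π * v) = S1 at *
      generalize Real.sinh ((π - 2 * ζ) * v) = S2 at *
      generalize Real.sinh ((π - ζ) * v) = S3 at *
      field_simp
    · have := sinh_pos_mul (c := π - 2 * ζ) (w := v) (by linarith)
      have e : 1 / π / 2 * (2 * π * Real.sinh ((π - 2 * ζ) * v) / Real.sinh (π * v)) =
         (Real.sinh ((π - 2 * ζ) * v) * Real.sinh (π * v)) / Real.sinh (π * v) ^ 2 := by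
        field_simp
      rw [e]
      positivity

end

/-! ### Convolutions -/

/-- convolution -/
def cv (f k : ℝ → ℝ) (x : ℝ) : ℝ := ∫ t, f t * k (x - t)

lemma cv_eq (f k : ℝ → ℝ) : cv f k = (f ⋆[ContinuousLinearMap.mul ℝ ℝ, volume] k) := rfl

lemma integrable_cv {f k : ℝ → ℝ} (hf : Integrable f) (hk : Integrable k) : Integrable (cv f k) :=
  hf.integrable_convolution (ContinuousLinearMap.mul ℝ ℝ) hk

lemma integral_cv {f k : ℝ → ℝ} (hf : Integrable f) (hk : Integrable k) :
    ∫ x, cv f k x = (∫ x, f x) * ∫ x, k x :=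
  integral_convolution (ContinuousLinearMap.mul ℝ ℝ) hf hk

lemma continuous_cv {f k : ℝ → ℝ} (hf : Integrable f) (hk : Continuous k)
    (hb : ∃ B, ∀ x, |k x| ≤ B) : Continuous (cv f k) := by
  obtain ⟨B, hB⟩ := hb
  rw [cv_eq]
  exact BddAbove.continuous_convolution_right_of_integrable _
    ⟨B, by rintro _ ⟨x, rfl⟩; exact hB x⟩ hf hk

lemma fourier_cv {f k : ℝ → ℝ} (hf : Integrable f) (hk : Integrable k) (w : ℝ) :
    𝓕 (fun x => (cv f k x : ℂ)) w = 𝓕 (fun x => (f x : ℂ)) w * 𝓕 (fun x => (k x : ℂ)) w := by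
  have hf' : Integrable (fun x => (f x : ℂ)) := hf.ofReal
  have hk' : Integrable (fun x => (k x : ℂ)) := hk.ofReal
  rw [← Real.fourier_mul_convolution_eq hf' hk']
  apply congrArg (fun F : ℝ → ℂ => 𝓕 F w)
  ext x
  unfold cv
  rw [← integral_complex_ofReal]
  simp [convolution]

lemma integrable_cv_integrand {f k : ℝ → ℝ} (hf : Integrable f) (hk : Continuous k)
    (hb : ∃ B, ∀ x, |k x| ≤ B) (x : ℝ) : Integrable (fun t => f t * k (x - t)) := by
  obtain ⟨B, hB⟩ := hb
  refine hf.mul_bdd (c := B) (by fun_prop) ?_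
  filter_upwards with t
  exact hB _

lemma cv_le {f k : ℝ → ℝ} (hf : Integrable f) (hk : Continuous k)
    (hb : ∃ B, ∀ x, |k x| ≤ B) (hki : Integrable k) (hk0 : ∀ x, 0 ≤ k x) {A : ℝ}
    (hA : ∀ x, f x ≤ A) (x : ℝ) : cv f k x ≤ A * ∫ y, k y := by
  have e : A * ∫ y, k y = ∫ t, A * k (x - t) := by
    rw [integral_const_mul, integral_sub_left_eq_self]
  rw [e]
  refine integral_mono (integrable_cv_integrand hf hk hb x)
    ((hki.comp_sub_left x).const_mul A) (fun t => ?_)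
  exact mul_le_mul_of_nonneg_right (hA t) (hk0 _)

lemma le_cv {f k : ℝ → ℝ} (hf : Integrable f) (hk : Continuous k)
    (hb : ∃ B, ∀ x, |k x| ≤ B) (hki : Integrable k) (hk0 : ∀ x, 0 ≤ k x) {A : ℝ}
    (hA : ∀ x, A ≤ f x) (x : ℝ) : A * (∫ y, k y) ≤ cv f k x := by
  have e : A * ∫ y, k y = ∫ t, A * k (x - t) := by
    rw [integral_const_mul, integral_sub_left_eq_self]
  rw [e]
  refine integral_mono ((hki.comp_sub_left x).const_mul A)
    (integrable_cv_integrand hf hk hb x) (fun t => ?_)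
  exact mul_le_mul_of_nonneg_right (hA t) (hk0 _)

lemma cv_bounded {f k : ℝ → ℝ} (hf : Integrable f) (hb : ∃ B, ∀ x, |k x| ≤ B) :
    ∃ B, ∀ x, |cv f k x| ≤ B := by
  obtain ⟨B, hB⟩ := hb
  refine ⟨∫ t, |f t| * B, fun x => ?_⟩
  rw [← Real.norm_eq_abs]
  unfold cv
  refine norm_integral_le_of_norm_le (hf.abs.mul_const B) ?_
  filter_upwards with t
  rw [norm_mul]
  exact mul_le_mul_of_nonneg_left (hB _) (abs_nonneg _)

section
variable {ζ : ℝ}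

lemma Kml_fun (ζ : ℝ) : Kml ζ = sk (1 / π) 2 (2 * ζ) := funext (Kml_eq ζ)
lemma xiMl_fun (ζ : ℝ) : xiMl ζ = sk (1 / π) 2 ζ := funext (xiMl_eq ζ)
lemma rhoInf_fun (ζ : ℝ) : rhoInf ζ = sk (1 / (2 * ζ)) (π / ζ) (π / 2) := funext (rhoInf_eq ζ)
lemma PP_fun (ζ : ℝ) : PP ζ = sk (1 / (π - ζ)) (2 * π / (π - ζ)) (aP ζ) := rfl

lemma rho_int (h0 : 0 < ζ) : Integrable (rhoInf ζ) := by
  rw [rhoInf_fun]; exact integrable_sk _ (div_pos Real.pi_pos h0) cos_half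
lemma rho_cont : Continuous (rhoInf ζ) := by
  rw [rhoInf_fun]; exact continuous_sk _ _ cos_half
lemma rho_bdd : ∃ B, ∀ x, |rhoInf ζ x| ≤ B := by
  rw [rhoInf_fun]; exact sk_bounded _ _ cos_half
lemma rho_pos (h0 : 0 < ζ) (x : ℝ) : 0 < rhoInf ζ x := by
  unfold rhoInf; have := Real.cosh_pos (π * x / ζ); positivity
lemma rho_mass (h0 : 0 < ζ) : ∫ x, rhoInf ζ x = 1 / 2 := by
  have hp := Real.pi_pos
  rw [rhoInf_fun, integral_sk _ (by positivity) (by positivity) (by linarith)]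
  field_simp
  ring

lemma PP_int (h0 : 0 < ζ) (h1 : ζ ≤ π / 2) : Integrable (PP ζ) := by
  have hp := Real.pi_pos
  have : 0 < π - ζ := by linarith
  exact integrable_sk _ (by positivity) (cos_aP h0 h1)
lemma PP_cont (h0 : 0 < ζ) (h1 : ζ ≤ π / 2) : Continuous (PP ζ) :=
  continuous_sk _ _ (cos_aP h0 h1)
lemma PP_bdd (h0 : 0 < ζ) (h1 : ζ ≤ π / 2) : ∃ B, ∀ x, |PP ζ x| ≤ B :=
  sk_bounded _ _ (cos_aP h0 h1)
lemma PP_nonneg (h0 : 0 < ζ) (h1 : ζ ≤ π / 2) (x : ℝ) : 0 ≤ PP ζ x := by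
  have hp := Real.pi_pos
  have : 0 < π - ζ := by linarith
  have h3 := Real.sin_nonneg_of_nonneg_of_le_pi (aP_pos h0 h1).le (aP_le h0 h1)
  have h4 := den_pos (cos_aP h0 h1) (2 * π / (π - ζ) * x)
  unfold PP sk uk
  positivity
lemma PP_mass_nonneg (h0 : 0 < ζ) (h1 : ζ ≤ π / 2) : 0 ≤ ∫ x, PP ζ x :=
  integral_nonneg (PP_nonneg h0 h1)
lemma PP_mass_le (h0 : 0 < ζ) (h1 : ζ ≤ π / 2) : ∫ x, PP ζ x ≤ 1 := by
  have hp := Real.pi_pos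
  have : 0 < π - ζ := by linarith
  rw [PP_fun, integral_sk _ (by positivity) (aP_pos h0 h1) (aP_le h0 h1)]
  have e : 1 / (π - ζ) / (2 * π / (π - ζ)) * (2 * (π - aP ζ)) = (π - aP ζ) / π := by
    field_simp
  rw [e, div_le_one hp]
  linarith [aP_pos h0 h1]

lemma Kml_int (h0 : 0 < ζ) (h1 : ζ ≤ π / 2) : Integrable (Kml ζ) := by
  rw [Kml_fun]; exact integrable_sk _ two_pos (cos_K h0 h1)
lemma Kml_cont (h0 : 0 < ζ) (h1 : ζ ≤ π / 2) : Continuous (Kml ζ) := by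
  rw [Kml_fun]; exact continuous_sk _ _ (cos_K h0 h1)
lemma Kml_bdd (h0 : 0 < ζ) (h1 : ζ ≤ π / 2) : ∃ B, ∀ x, |Kml ζ x| ≤ B := by
  rw [Kml_fun]; exact sk_bounded _ _ (cos_K h0 h1)
lemma xi_int (h0 : 0 < ζ) (h1 : ζ ≤ π / 2) : Integrable (xiMl ζ) := by
  rw [xiMl_fun]; exact integrable_sk _ two_pos (cos_xi h0 h1)
lemma xi_cont (h0 : 0 < ζ) (h1 : ζ ≤ π / 2) : Continuous (xiMl ζ) := by
  rw [xiMl_fun]; exact continuous_sk _ _ (cos_xi h0 h1)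
lemma xi_bdd (h0 : 0 < ζ) (h1 : ζ ≤ π / 2) : ∃ B, ∀ x, |xiMl ζ x| ≤ B := by
  rw [xiMl_fun]; exact sk_bounded _ _ (cos_xi h0 h1)

/-- inner and outer parts -/
def gin (q : ℝ) (g : ℝ → ℝ) : ℝ → ℝ := Set.indicator (Set.Ioc (-q) q) g
def gout (q : ℝ) (g : ℝ → ℝ) : ℝ → ℝ := Set.indicator (Set.Ioc (-q) q)ᶜ g

lemma gin_add_gout (q : ℝ) (g : ℝ → ℝ) (x : ℝ) : gin q g x + gout q g x = g x :=
  Set.indicator_self_add_compl_apply _ _ _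

lemma gin_int {q : ℝ} {g : ℝ → ℝ} (hg : Integrable g) : Integrable (gin q g) :=
  hg.indicator measurableSet_Ioc
lemma gout_int {q : ℝ} {g : ℝ → ℝ} (hg : Integrable g) : Integrable (gout q g) :=
  hg.indicator measurableSet_Ioc.compl

lemma BE_cv {q : ℝ} (hq : 0 ≤ q) {g : ℝ → ℝ} (h : IsBEml ζ q g) (x : ℝ) :
    g x + cv (gin q g) (Kml ζ) x = xiMl ζ x := by
  rw [← h.2.2 x]
  congr 1
  rw [intervalIntegral.integral_of_le (by linarith), ← integral_indicator measurableSet_Ioc]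
  unfold cv gin
  congr 1
  ext t
  by_cases ht : t ∈ Set.Ioc (-q) q <;> simp [ht, mul_comm]

lemma g_cont (h0 : 0 < ζ) (h1 : ζ ≤ π / 2) {q : ℝ} (hq : 0 ≤ q) {g : ℝ → ℝ} (h : IsBEml ζ q g) :
    Continuous g := by
  have e : g = fun x => xiMl ζ x - cv (gin q g) (Kml ζ) x := by
    ext x; linarith [BE_cv hq h x]
  have c2 := continuous_cv (gin_int (q := q) h.1) (Kml_cont h0 h1) (Kml_bdd h0 h1)
  rw [e]
  exact (xi_cont h0 h1).sub c2

lemma g_bdd (h0 : 0 < ζ) (h1 : ζ ≤ π / 2) {q : ℝ} (hq : 0 ≤ q) {g : ℝ → ℝ} (h : IsBEml ζ q g) :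
    ∃ B, ∀ x, |g x| ≤ B := by
  obtain ⟨B1, hB1⟩ := xi_bdd h0 h1
  obtain ⟨B2, hB2⟩ := cv_bounded (gin_int (q := q) h.1) (Kml_bdd h0 h1)
  refine ⟨B1 + B2, fun x => ?_⟩
  have : g x = xiMl ζ x - cv (gin q g) (Kml ζ) x := by linarith [BE_cv hq h x]
  rw [this]
  exact (abs_sub _ _).trans (add_le_add (hB1 x) (hB2 x))

lemma fourier_add' {f g : ℝ → ℝ} (hf : Integrable f) (hg : Integrable g) (w : ℝ) :
    𝓕 (fun x => ((f x + g x : ℝ) : ℂ)) w = 𝓕 (fun x => (f x : ℂ)) w + 𝓕 (fun x => (g x : ℂ)) w := by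
  simp only [Real.fourier_real_eq_integral_exp_smul]
  have key : ∀ f : ℝ → ℝ, Integrable f →
      Integrable (fun v : ℝ => Complex.exp (↑(-2 * π * v * w) * Complex.I) • (f v : ℂ)) := by
    intro f hf
    refine hf.ofReal.bdd_mul (c := 1) (by fun_prop) ?_
    filter_upwards with v
    rw [Complex.norm_exp_ofReal_mul_I]
  rw [← integral_add (key f hf) (key g hg)]
  congr 1
  ext v
  push_cast
  rw [smul_add]

theorem g_rep (h0 : 0 < ζ) (h1 : ζ ≤ π / 2) {q : ℝ} (hq : 0 ≤ q) {g : ℝ → ℝ} (h : IsBEml ζ q g)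
    (x : ℝ) : g x = rhoInf ζ x + cv (cv (gout q g) (PP ζ)) (rhoInf ζ) x := by
  have hp := Real.pi_pos
  have hz : 0 < π - ζ := by linarith
  have iin := gin_int (q := q) h.1
  have iout := gout_int (q := q) h.1
  have iP := PP_int h0 h1
  have iR := rho_int h0
  have iK := Kml_int h0 h1
  have iX := xi_int h0 h1
  have if1 := integrable_cv iout iP
  have if2 := integrable_cv if1 iR
  let v : ℝ → ℝ := fun x => g x + (-1 * (rhoInf ζ x + cv (cv (gout q g) (PP ζ)) (rhoInf ζ) x))
  have hvi : Integrable v := h.1.add ((iR.add if2).const_mul (-1))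
  have hvc : Continuous v := by
    have c1 := g_cont h0 h1 hq h
    have c2 := continuous_cv if1 (rho_cont (ζ := ζ)) rho_bdd
    have c3 := rho_cont (ζ := ζ)
    exact c1.add (continuous_const.mul (c3.add c2))
  have fneg : ∀ f : ℝ → ℝ, ∀ w, 𝓕 (fun x => ((-1 * f x : ℝ) : ℂ)) w = - 𝓕 (fun x => (f x : ℂ)) w := by
    intro f w
    simp only [Real.fourier_real_eq_integral_exp_smul]
    rw [← integral_neg]
    congr 1
    ext v
    push_cast
    simp
  have hF : 𝓕 (fun x => (v x : ℂ)) = 0 := by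
    ext w
    have e1 : 𝓕 (fun x => (v x : ℂ)) w = 𝓕 (fun x => (g x : ℂ)) w -
        (𝓕 (fun x => (rhoInf ζ x : ℂ)) w + (𝓕 (fun x => (gout q g x : ℂ)) w *
          𝓕 (fun x => (PP ζ x : ℂ)) w) * 𝓕 (fun x => (rhoInf ζ x : ℂ)) w) := by
      rw [← fourier_cv iout iP, ← fourier_cv if1 iR, ← fourier_add' iR if2, sub_eq_add_neg,
        ← fneg]
      exact fourier_add' h.1 ((iR.add if2).const_mul (-1)) w
    have e2 : 𝓕 (fun x => (g x : ℂ)) w +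
        𝓕 (fun x => (gin q g x : ℂ)) w * 𝓕 (fun x => (Kml ζ x : ℂ)) w =
        𝓕 (fun x => (xiMl ζ x : ℂ)) w := by
      rw [← fourier_cv iin iK, ← fourier_add' h.1 (integrable_cv iin iK)]
      simp_rw [BE_cv hq h]
    have e3 : 𝓕 (fun x => (g x : ℂ)) w =
        𝓕 (fun x => (gin q g x : ℂ)) w + 𝓕 (fun x => (gout q g x : ℂ)) w := by
      rw [← fourier_add' iin iout]
      simp_rw [gin_add_gout]
    have fK : 𝓕 (fun x => (Kml ζ x : ℂ)) w = (hK ζ w : ℂ) := by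
      rw [Kml_fun]; exact fourier_sk _ two_pos (cos_K h0 h1) w
    have fX : 𝓕 (fun x => (xiMl ζ x : ℂ)) w = (hX ζ w : ℂ) := by
      rw [xiMl_fun]; exact fourier_sk _ two_pos (cos_xi h0 h1) w
    have fR : 𝓕 (fun x => (rhoInf ζ x : ℂ)) w = (hR ζ w : ℂ) := by
      rw [rhoInf_fun]; exact fourier_sk _ (by positivity) cos_half w
    have fP : 𝓕 (fun x => (PP ζ x : ℂ)) w = (hP ζ w : ℂ) := by
      rw [PP_fun]; exact fourier_sk _ (by positivity) (cos_aP h0 h1) w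
    obtain ⟨s1, s2, s3⟩ := symbols h0 h1 w
    have s1c : (hR ζ w : ℂ) * (1 + hK ζ w) = hX ζ w := by exact_mod_cast s1
    have s2c : (hK ζ w : ℂ) = hX ζ w * hP ζ w := by exact_mod_cast s2
    have s3c : (1 + hK ζ w : ℂ) ≠ 0 := by
      have : (1 + hK ζ w : ℝ) ≠ 0 := by positivity
      exact_mod_cast this
    rw [e1, fR, fP]
    rw [fK, fX] at e2
    generalize 𝓕 (fun x => (g x : ℂ)) w = G at *
    generalize 𝓕 (fun x => (gin q g x : ℂ)) w = Gi at *
    generalize 𝓕 (fun x => (gout q g x : ℂ)) w = Go at *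
    apply mul_left_cancel₀ s3c
    simp only [Pi.zero_apply, mul_zero]
    linear_combination e2 - (1 + Go * hP ζ w) * s1c + Go * s2c + hK ζ w * e3
  have hinv := hvi.ofReal (𝕜 := ℂ) |>.fourierInv_fourier_eq (v := x)
    (by rw [show 𝓕 (fun x => ((RCLike.ofReal (v x) : ℂ))) = 0 from hF]; exact integrable_zero _ _ _)
    ((Complex.continuous_ofReal.comp hvc).continuousAt)
  rw [show 𝓕 (fun x => ((RCLike.ofReal (v x) : ℂ))) = 0 from hF] at hinv
  have hv0 : v x = 0 := by
    have : ((v x : ℝ) : ℂ) = 0 := by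
      refine hinv.symm.trans ?_
      rw [Real.fourierInv_eq]
      simp
    exact_mod_cast this
  simp only [v] at hv0
  linarith

end

section
variable {ζ : ℝ}

lemma gout_le {q A : ℝ} {g : ℝ → ℝ} (hA : 0 ≤ A) (h : ∀ x, q ≤ |x| → g x ≤ A) (x : ℝ) :
    gout q g x ≤ A := by
  unfold gout
  refine Set.indicator_apply_le' (fun hx => h x ?_) (fun _ => hA)
  simp only [Set.mem_compl_iff, Set.mem_Ioc, not_and_or, not_lt, not_le] at hx
  rcases hx with hx | hx
  · exact le_trans (by linarith) (neg_le_abs x)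
  · exact hx.le.trans (le_abs_self x)

lemma le_gout {q A : ℝ} {g : ℝ → ℝ} (hA : A ≤ 0) (h : ∀ x, A ≤ g x) (x : ℝ) :
    A ≤ gout q g x := by
  unfold gout
  exact Set.le_indicator_apply (fun _ => h x) (fun _ => hA)

lemma rho_le_q (h0 : 0 < ζ) {q x : ℝ} (hq : 0 ≤ q) (h : q ≤ |x|) : rhoInf ζ x ≤ rhoInf ζ q := by
  have hp := Real.pi_pos
  unfold rhoInf
  have : Real.cosh (π * q / ζ) ≤ Real.cosh (π * x / ζ) := by
    rw [Real.cosh_le_cosh]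
    rw [abs_div, abs_div, abs_mul, abs_mul, abs_of_nonneg hq]
    gcongr
  have := Real.cosh_pos (π * q / ζ)
  gcongr

lemma le_of_pow_half {a b B : ℝ} (h : ∀ n : ℕ, a ≤ b + B * (1 / 2) ^ n) : a ≤ b := by
  have t : Tendsto (fun n : ℕ => b + B * (1 / 2 : ℝ) ^ n) atTop (nhds (b + B * 0)) :=
    (tendsto_pow_atTop_nhds_zero_of_lt_one (by norm_num) (by norm_num)).const_mul B |>.const_add b
  have := ge_of_tendsto' t h
  simpa using this

variable {q : ℝ} {g : ℝ → ℝ}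

lemma step_le (h0 : 0 < ζ) (h1 : ζ ≤ π / 2)
    {f : ℝ → ℝ} (hf : Integrable f) {A : ℝ} (hA : 0 ≤ A) (hfA : ∀ x, f x ≤ A) (x : ℝ) :
    cv (cv f (PP ζ)) (rhoInf ζ) x ≤ A / 2 := by
  have k1 : ∀ y, cv f (PP ζ) y ≤ A := fun y =>
    (cv_le hf (PP_cont h0 h1) (PP_bdd h0 h1) (PP_int h0 h1) (PP_nonneg h0 h1) hfA y).trans
      (mul_le_of_le_one_right hA (PP_mass_le h0 h1))
  have k2 := cv_le (integrable_cv hf (PP_int h0 h1)) rho_cont rho_bdd (rho_int h0)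
    (fun x => (rho_pos h0 x).le) k1 x
  rw [rho_mass h0] at k2
  linarith

lemma le_step (h0 : 0 < ζ) (h1 : ζ ≤ π / 2)
    {f : ℝ → ℝ} (hf : Integrable f) {A : ℝ} (hA : A ≤ 0) (hfA : ∀ x, A ≤ f x) (x : ℝ) :
    A / 2 ≤ cv (cv f (PP ζ)) (rhoInf ζ) x := by
  have k1 : ∀ y, A ≤ cv f (PP ζ) y := fun y => by
    refine le_trans ?_
      (le_cv hf (PP_cont h0 h1) (PP_bdd h0 h1) (PP_int h0 h1) (PP_nonneg h0 h1) hfA y)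
    nlinarith [PP_mass_le h0 h1]
  have k2 := le_cv (integrable_cv hf (PP_int h0 h1)) rho_cont rho_bdd (rho_int h0)
    (fun x => (rho_pos h0 x).le) k1 x
  rw [rho_mass h0] at k2
  linarith

lemma gout_nonneg (h0 : 0 < ζ) (h1 : ζ ≤ π / 2) (hq : 0 ≤ q) (h : IsBEml ζ q g)
    (x : ℝ) : 0 ≤ gout q g x := by
  obtain ⟨B, hB⟩ := g_bdd h0 h1 hq h
  have hB0 : 0 ≤ B := (abs_nonneg _).trans (hB 0)
  have key : ∀ n : ℕ, ∀ x, -(B * (1 / 2) ^ n) ≤ gout q g x := by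
    intro n
    induction n with
    | zero =>
      refine le_gout (by simpa using hB0) (fun x => ?_)
      simpa using (abs_le.1 (hB x)).1
    | succ n ih =>
      have hn : 0 ≤ B * (1 / 2 : ℝ) ^ n := by positivity
      refine le_gout (by simp only [Left.neg_nonpos_iff]; positivity) (fun x => ?_)
      have := le_step h0 h1 (gout_int h.1) (by linarith) ih x
      rw [g_rep h0 h1 hq h x, pow_succ]
      linarith [rho_pos h0 x]
  have : -gout q g x ≤ 0 := le_of_pow_half (B := B) (fun n => by linarith [key n x])
  linarith

lemma gout_upper (h0 : 0 < ζ) (h1 : ζ ≤ π / 2) (hq : 0 ≤ q) (h : IsBEml ζ q g)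
    (x : ℝ) : gout q g x ≤ 2 * rhoInf ζ q := by
  obtain ⟨B, hB⟩ := g_bdd h0 h1 hq h
  have hB0 : 0 ≤ B := (abs_nonneg _).trans (hB 0)
  have hr := rho_pos h0 q
  have key : ∀ n : ℕ, ∀ x, gout q g x ≤ 2 * rhoInf ζ q + B * (1 / 2) ^ n := by
    intro n
    induction n with
    | zero =>
      refine gout_le (by positivity) (fun x _ => ?_)
      have := (abs_le.1 (hB x)).2
      rw [pow_zero]
      linarith
    | succ n ih =>
      refine gout_le (by positivity) (fun x hx => ?_)
      have := step_le h0 h1 (gout_int h.1) (by positivity) ih x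
      have := rho_le_q h0 hq hx
      rw [g_rep h0 h1 hq h x, pow_succ]
      linarith [rho_pos h0 x]
  exact le_of_pow_half (B := B) (fun n => key n x)

lemma rho_le_g (h0 : 0 < ζ) (h1 : ζ ≤ π / 2) (hq : 0 ≤ q) (h : IsBEml ζ q g)
    (x : ℝ) : rhoInf ζ x ≤ g x := by
  have := le_step h0 h1 (gout_int h.1) le_rfl (gout_nonneg h0 h1 hq h) x
  rw [g_rep h0 h1 hq h x]
  linarith

lemma g_le (h0 : 0 < ζ) (h1 : ζ ≤ π / 2) (hq : 0 ≤ q) (h : IsBEml ζ q g)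
    (x : ℝ) : g x ≤ rhoInf ζ x + rhoInf ζ q := by
  have := step_le h0 h1 (gout_int h.1) (by linarith [rho_pos h0 q]) (gout_upper h0 h1 hq h) x
  rw [g_rep h0 h1 hq h x]
  linarith

lemma f_nonneg (h0 : 0 < ζ) (h1 : ζ ≤ π / 2) (hq : 0 ≤ q) (h : IsBEml ζ q g)
    (x : ℝ) : 0 ≤ cv (gout q g) (PP ζ) x :=
  integral_nonneg (fun t => mul_nonneg (gout_nonneg h0 h1 hq h t) (PP_nonneg h0 h1 _))

/-- derivative of the density -/
def rhoD (ζ x : ℝ) : ℝ := -(π / ζ) * (Real.sinh (π * x / ζ) / Real.cosh (π * x / ζ)) * rhoInf ζ x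

lemma rho_hasDeriv (h0 : 0 < ζ)
    (x : ℝ) : HasDerivAt (rhoInf ζ) (rhoD ζ x) x := by
  have hc := Real.cosh_pos (π * x / ζ)
  have d1 : HasDerivAt (fun x => π * x / ζ) (π / ζ) x := by
    simpa using ((hasDerivAt_id x).const_mul π).div_const ζ
  have d2 := (d1.cosh.const_mul (2 * ζ)).inv (by positivity)
  have e : rhoInf ζ = (fun x => 2 * ζ * Real.cosh (π * x / ζ))⁻¹ := by
    ext y; simp [rhoInf]
  rw [e]
  refine d2.congr_deriv ?_
  unfold rhoD rhoInf
  field_simp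

lemma rhoD_le (h0 : 0 < ζ)
    (x : ℝ) : |rhoD ζ x| ≤ π / ζ * rhoInf ζ x := by
  have hc := Real.cosh_pos (π * x / ζ)
  have hr := rho_pos h0 x
  have hp := Real.pi_pos
  have : |Real.sinh (π * x / ζ) / Real.cosh (π * x / ζ)| ≤ 1 := by
    rw [abs_div, abs_of_pos hc, div_le_one hc, ← abs_of_pos hc]
    apply sq_le_sq.1
    nlinarith [Real.cosh_sq (π * x / ζ)]
  unfold rhoD
  rw [abs_mul, abs_mul, abs_neg, abs_of_pos hr, abs_of_pos (div_pos hp h0)]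
  have : 0 < π / ζ := div_pos hp h0
  exact mul_le_mul_of_nonneg_right (mul_le_of_le_one_right this.le (by assumption)) hr.le

lemma rhoD_cont : Continuous (rhoD ζ) := by
  have := rho_cont (ζ := ζ)
  unfold rhoD
  have hc : ∀ x, Real.cosh (π * x / ζ) ≠ 0 := fun x => (Real.cosh_pos _).ne'
  fun_prop (disch := exact hc _)

lemma cv_hasDeriv (h0 : 0 < ζ)
    {f : ℝ → ℝ} (hf : Integrable f) (x : ℝ) :
    HasDerivAt (cv f (rhoInf ζ)) (cv f (rhoD ζ) x) x := by
  obtain ⟨B, hB⟩ := rho_bdd (ζ := ζ)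
  have hp := Real.pi_pos
  have hz : 0 < π / ζ := div_pos hp h0
  have hc := rhoD_cont (ζ := ζ)
  have hc' := rho_cont (ζ := ζ)
  have := hasDerivAt_integral_of_dominated_loc_of_deriv_le (μ := volume) (𝕜 := ℝ)
    (F := fun x t => f t * rhoInf ζ (x - t)) (F' := fun x t => f t * rhoD ζ (x - t)) (x₀ := x)
    (s := Set.univ) (bound := fun t => |f t| * (π / ζ * B)) univ_mem
    (Eventually.of_forall fun y => (integrable_cv_integrand hf hc' ⟨B, hB⟩ y).aestronglyMeasurable)
    (integrable_cv_integrand hf hc' ⟨B, hB⟩ x)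
    (hf.aestronglyMeasurable.mul (by fun_prop))
    (Eventually.of_forall fun t y _ => by
      rw [norm_mul]
      refine mul_le_mul_of_nonneg_left ?_ (norm_nonneg _)
      refine (rhoD_le h0 _).trans ?_
      exact mul_le_mul_of_nonneg_left ((le_abs_self _).trans (hB _)) hz.le)
    (hf.abs.mul_const _)
    (Eventually.of_forall fun t y _ => by
      have := (rho_hasDeriv h0 (y - t)).comp y ((hasDerivAt_id y).sub_const t)
      rw [mul_one] at this
      exact this.const_mul (f t))
  exact this.2

lemma cv_rhoD_le (h0 : 0 < ζ)
    {f : ℝ → ℝ} (hf : Integrable f) (hf0 : ∀ x, 0 ≤ f x) (x : ℝ) :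
    |cv f (rhoD ζ) x| ≤ π / ζ * cv f (rhoInf ζ) x := by
  unfold cv
  rw [← integral_const_mul, ← Real.norm_eq_abs]
  refine norm_integral_le_of_norm_le
    ((integrable_cv_integrand hf rho_cont rho_bdd x).const_mul _) ?_
  filter_upwards with t
  rw [norm_mul, Real.norm_eq_abs, Real.norm_eq_abs, abs_of_nonneg (hf0 t)]
  have := mul_le_mul_of_nonneg_left (rhoD_le h0 (x - t)) (hf0 t)
  linarith

lemma g_hasDeriv (h0 : 0 < ζ) (h1 : ζ ≤ π / 2) (hq : 0 ≤ q) (h : IsBEml ζ q g)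
    (x : ℝ) :
    HasDerivAt g (rhoD ζ x + cv (cv (gout q g) (PP ζ)) (rhoD ζ) x) x := by
  have e : g = rhoInf ζ + cv (cv (gout q g) (PP ζ)) (rhoInf ζ) := by
    ext y; exact g_rep h0 h1 hq h y
  have := (rho_hasDeriv h0 x).add
    (cv_hasDeriv h0 (integrable_cv (gout_int (q := q) h.1) (PP_int h0 h1)) x)
  rw [← e] at this
  exact this

lemma g_deriv_le (h0 : 0 < ζ) (h1 : ζ ≤ π / 2) (hq : 0 ≤ q) (h : IsBEml ζ q g)
    (x : ℝ) : |deriv g x| ≤ π / ζ * g x := by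
  rw [(g_hasDeriv h0 h1 hq h x).deriv]
  refine (abs_add_le _ _).trans ?_
  have k1 := rhoD_le h0 x
  have k2 := cv_rhoD_le h0 (integrable_cv (gout_int (q := q) h.1) (PP_int h0 h1))
    (f_nonneg h0 h1 hq h) x
  have := g_rep h0 h1 hq h x
  have e : π / ζ * g x = π / ζ * rhoInf ζ x +
    π / ζ * cv (cv (gout q g) (PP ζ)) (rhoInf ζ) x := by rw [← mul_add, ← this]
  linarith

/-! mass estimates -/

lemma mass_eq (h0 : 0 < ζ) (h1 : ζ ≤ π / 2) (hq : 0 ≤ q) (h : IsBEml ζ q g)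
    : 1 / 2 - (∫ t in (-q)..q, g t) =
    (∫ x, gout q g x) * (1 - (∫ x, PP ζ x) / 2) := by
  have iout := gout_int (q := q) h.1
  have if1 := integrable_cv iout (PP_int h0 h1)
  have a1 : ∫ x, g x = (∫ t in (-q)..q, g t) + ∫ x, gout q g x := by
    rw [intervalIntegral.integral_of_le (by linarith), ← integral_indicator measurableSet_Ioc]
    change _ = (∫ x, gin q g x) + _
    rw [← integral_add (gin_int h.1) iout]
    exact integral_congr_ae (Eventually.of_forall fun x => (gin_add_gout q g x).symm)
  have a2 : ∫ x, g x = 1 / 2 + (∫ x, gout q g x) * (∫ x, PP ζ x) * (1 / 2) := by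
    have e : ∫ x, g x = ∫ x, (rhoInf ζ x + cv (cv (gout q g) (PP ζ)) (rhoInf ζ) x) :=
      integral_congr_ae (Eventually.of_forall fun x => g_rep h0 h1 hq h x)
    rw [e, integral_add (rho_int h0) (integrable_cv if1 (rho_int h0)), integral_cv if1 (rho_int h0),
      integral_cv iout (PP_int h0 h1), rho_mass h0]
  linarith

lemma tau_le (h0 : 0 < ζ) (h1 : ζ ≤ π / 2) (hq : 0 ≤ q) (h : IsBEml ζ q g)
    : ∫ x, gout q (rhoInf ζ) x ≤ ∫ x, gout q g x := by
  refine integral_mono (gout_int (rho_int h0)) (gout_int h.1) (fun x => ?_)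
  exact Set.indicator_le_indicator (rho_le_g h0 h1 hq h x)

lemma le_tau (h0 : 0 < ζ) (h1 : ζ ≤ π / 2) (hq : 0 ≤ q) (h : IsBEml ζ q g)
    : ∫ x, gout q g x ≤ 2 * ∫ x, gout q (rhoInf ζ) x := by
  have iout := gout_int (q := q) h.1
  have if1 := integrable_cv iout (PP_int h0 h1)
  have if2 := integrable_cv if1 (rho_int h0)
  have a1 : ∫ x, gout q g x ≤ ∫ x, (gout q (rhoInf ζ) x +
      cv (cv (gout q g) (PP ζ)) (rhoInf ζ) x) := by
    refine integral_mono iout ((gout_int (rho_int h0)).add if2) (fun x => ?_)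
    have nn : 0 ≤ cv (cv (gout q g) (PP ζ)) (rhoInf ζ) x := by
      linarith [rho_le_g h0 h1 hq h x, g_rep h0 h1 hq h x]
    show gout q g x ≤ gout q (rhoInf ζ) x + cv (cv (gout q g) (PP ζ)) (rhoInf ζ) x
    have := g_rep h0 h1 hq h x
    by_cases hx : x ∈ (Set.Ioc (-q) q)ᶜ
    · rw [gout, gout, Set.indicator_of_mem hx, Set.indicator_of_mem hx]
      exact this.le
    · have z1 : gout q g x = 0 := Set.indicator_of_notMem hx _
      have z2 : gout q (rhoInf ζ) x = 0 := Set.indicator_of_notMem hx _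
      rw [z1, z2]; linarith
  rw [integral_add (gout_int (rho_int h0)) if2, integral_cv if1 (rho_int h0),
      integral_cv iout (PP_int h0 h1), rho_mass h0] at a1
  have T0 : 0 ≤ ∫ x, gout q g x := integral_nonneg (gout_nonneg h0 h1 hq h)
  have := mul_le_of_le_one_right T0 (PP_mass_le h0 h1)
  linarith

lemma rho_ge_exp (h0 : 0 < ζ)
    (x : ℝ) (hx : 0 ≤ x) : Real.exp (-(π / ζ) * x) / (2 * ζ) ≤ rhoInf ζ x := by
  have hp := Real.pi_pos
  have hc := Real.cosh_pos (π * x / ζ)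
  have : Real.cosh (π * x / ζ) ≤ Real.exp (π * x / ζ) := by
    rw [Real.cosh_eq]
    have : Real.exp (-(π * x / ζ)) ≤ Real.exp (π * x / ζ) := by
      apply Real.exp_le_exp.2
      have : 0 ≤ π * x / ζ := by positivity
      linarith
    linarith
  unfold rhoInf
  rw [show -(π / ζ) * x = -(π * x / ζ) by ring, Real.exp_neg, ← one_div, div_div]
  apply one_div_le_one_div_of_le (by positivity)
  rw [mul_comm]
  gcongr

lemma rho_le_exp (h0 : 0 < ζ)
    (x : ℝ) : rhoInf ζ x ≤ Real.exp (-(π / ζ) * x) / ζ := by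
  have hp := Real.pi_pos
  have hc := Real.cosh_pos (π * x / ζ)
  have : Real.exp (π * x / ζ) / 2 ≤ Real.cosh (π * x / ζ) := by
    rw [Real.cosh_eq]
    linarith [Real.exp_pos (-(π * x / ζ))]
  unfold rhoInf
  rw [show -(π / ζ) * x = -(π * x / ζ) by ring, Real.exp_neg, ← one_div, div_div]
  apply one_div_le_one_div_of_le (by positivity)
  nlinarith

lemma rho_neg (x : ℝ) : rhoInf ζ (-x) = rhoInf ζ x := by
  unfold rhoInf
  rw [show π * -x / ζ = -(π * x / ζ) by ring, Real.cosh_neg]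

lemma int_exp (h0 : 0 < ζ)
    (q : ℝ) : IntegrableOn (fun x => Real.exp (-(π / ζ) * x)) (Set.Ioi q) ∧
    ∫ x in Set.Ioi q, Real.exp (-(π / ζ) * x) = ζ / π * Real.exp (-(π / ζ) * q) := by
  have hp := Real.pi_pos
  have hz : -(π / ζ) < 0 := by have := div_pos hp h0; linarith
  refine ⟨integrableOn_exp_mul_Ioi hz q, ?_⟩
  rw [integral_exp_mul_Ioi hz]
  field_simp

lemma tau_lower (h0 : 0 < ζ) (hq : 0 ≤ q)
    : Real.exp (-(π / ζ) * q) / (2 * π) ≤ ∫ x, gout q (rhoInf ζ) x := by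
  have hp := Real.pi_pos
  obtain ⟨i1, i2⟩ := int_exp h0 q
  have e : Real.exp (-(π / ζ) * q) / (2 * π) =
      ∫ x in Set.Ioi q, Real.exp (-(π / ζ) * x) / (2 * ζ) := by
    rw [integral_div, i2]; field_simp
  rw [e, ← integral_indicator measurableSet_Ioi]
  refine integral_mono ((integrable_indicator_iff measurableSet_Ioi).2 (Integrable.div_const i1 _))
    (gout_int (rho_int h0)) (fun x => ?_)
  by_cases hx : x ∈ Set.Ioi q
  · have hx' : x ∈ (Set.Ioc (-q) q)ᶜ := fun h => absurd h.2 (not_le.2 hx)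
    rw [gout, Set.indicator_of_mem hx, Set.indicator_of_mem hx']
    exact rho_ge_exp h0 x (hq.trans (le_of_lt hx))
  · rw [Set.indicator_of_notMem hx]
    exact Set.indicator_nonneg (fun y _ => (rho_pos h0 y).le) x

lemma tau_upper (h0 : 0 < ζ) (hq : 0 ≤ q)
    : ∫ x, gout q (rhoInf ζ) x ≤ 2 * Real.exp (-(π / ζ) * q) / π := by
  have hp := Real.pi_pos
  have i3 := (rho_int h0).integrableOn (s := Set.Ioi q)
  obtain ⟨i1, i2⟩ := int_exp h0 q
  have m : ∫ x in Set.Ioi q, rhoInf ζ x ≤ Real.exp (-(π / ζ) * q) / π := by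
    have e : Real.exp (-(π / ζ) * q) / π =
        ∫ x in Set.Ioi q, Real.exp (-(π / ζ) * x) / ζ := by
      rw [integral_div, i2]; field_simp
    rw [e]
    exact integral_mono i3 (i1.div_const _) (fun x => rho_le_exp h0 x)
  have hs : (Set.Ioc (-q) q)ᶜ = Set.Iic (-q) ∪ Set.Ioi q := by
    ext x; simp only [Set.mem_compl_iff, Set.mem_Ioc, Set.mem_union, Set.mem_Iic, Set.mem_Ioi,
      not_and_or, not_lt, not_le]
  have hd : Disjoint (Set.Iic (-q)) (Set.Ioi q) := by
    rw [Set.disjoint_left]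
    intro x hx hx2
    simp only [Set.mem_Iic, Set.mem_Ioi] at hx hx2
    linarith
  have e2 : ∫ x in Set.Iic (-q), rhoInf ζ x = ∫ x in Set.Ioi q, rhoInf ζ x := by
    rw [← integral_comp_neg_Ioi]
    simp_rw [rho_neg]
  unfold gout
  rw [integral_indicator measurableSet_Ioc.compl, hs,
    setIntegral_union hd measurableSet_Ioi (rho_int h0).integrableOn i3, e2]
  rw [mul_div_assoc]
  linarith

end

/-- **Properties of the densities `ρ(·|q)` for `-1 < Δ ≤ 0`** (Proposition B.2):
for every `ε > 0` there are constants `c, C > 0` such that for every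
`ζ ∈ (0,π/2]` and `q ≥ 0`, the solution `ρ(·|q)` satisfies
(i) `0 < ρ ≤ ρ(·|q) ≤ ρ + ρ(q)`;
(ii) `ρ(·|q)` is differentiable with `|ρ'(x|q)| ≤ (C/ζ)e^{πε/ζ} ρ(x|q)` on
`[-q-ε, q+ε]`;
(iii) if `∫_{-q}^q ρ(λ|q)dλ = m` with `m ∈ [0,1/2)`, then
`(c/ζ)(1/2-m) ≤ ρ(q) ≤ (C/ζ)(1/2-m)`. -/
theorem density_properties (ε : ℝ) (hε : 0 < ε) :
    ∃ c C : ℝ, 0 < c ∧ 0 < C ∧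
      ∀ ζ : ℝ, 0 < ζ → ζ ≤ π / 2 →
      ∀ q : ℝ, 0 ≤ q →
      ∀ g : ℝ → ℝ, IsBEml ζ q g →
        (∀ x : ℝ, 0 < rhoInf ζ x ∧ rhoInf ζ x ≤ g x ∧ g x ≤ rhoInf ζ x + rhoInf ζ q) ∧
        (Differentiable ℝ g ∧
          ∀ x ∈ Set.Icc (-q - ε) (q + ε),
            |deriv g x| ≤ C / ζ * Real.exp (π * ε / ζ) * g x) ∧
        (∀ m : ℝ, 0 ≤ m → m < 1 / 2 → (∫ t in (-q)..q, g t) = m →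
          c / ζ * (1 / 2 - m) ≤ rhoInf ζ q ∧ rhoInf ζ q ≤ C / ζ * (1 / 2 - m)) := by
  have hp := Real.pi_pos
  refine ⟨π / 8, 4 * π, by positivity, by positivity, ?_⟩
  intro ζ h0 h1 q hq g h
  refine ⟨fun x => ⟨rho_pos h0 x, rho_le_g h0 h1 hq h x, g_le h0 h1 hq h x⟩,
    ⟨fun x => (g_hasDeriv h0 h1 hq h x).differentiableAt, fun x _ => ?_⟩, ?_⟩
  · refine (g_deriv_le h0 h1 hq h x).trans ?_
    have hg : 0 ≤ g x := (rho_pos h0 x).le.trans (rho_le_g h0 h1 hq h x)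
    refine mul_le_mul_of_nonneg_right ?_ hg
    have e1 : 1 ≤ Real.exp (π * ε / ζ) := Real.one_le_exp (by positivity)
    have e2 : 0 < π / ζ := div_pos hp h0
    have e3 : 4 * π / ζ = 4 * (π / ζ) := by ring
    rw [e3]
    nlinarith
  · intro m _ _ hm
    have k1 := mass_eq h0 h1 hq h
    have k2 := tau_le h0 h1 hq h
    have k3 := le_tau h0 h1 hq h
    have k4 := tau_lower h0 hq
    have k5 := tau_upper h0 hq
    have k6 := rho_ge_exp h0 q hq
    have k7 := rho_le_exp h0 q
    have p0 := PP_mass_nonneg h0 h1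
    have p1 := PP_mass_le h0 h1
    have T0 : 0 ≤ ∫ x, gout q g x := integral_nonneg (gout_nonneg h0 h1 hq h)
    rw [hm] at k1
    rw [k1]
    generalize (∫ x, gout q g x) = T at *
    generalize (∫ x, gout q (rhoInf ζ) x) = τ at *
    generalize (∫ x, PP ζ x) = p at *
    generalize Real.exp (-(π / ζ) * q) = E at *
    generalize rhoInf ζ q = r at *
    have b1 : T / 2 ≤ T * (1 - p / 2) := by nlinarith
    have b2 : T * (1 - p / 2) ≤ T := by nlinarith
    generalize T * (1 - p / 2) = D at *
    rw [div_le_iff₀ (by positivity)] at k4 k6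
    rw [le_div_iff₀ (by positivity)] at k5 k7
    constructor
    · rw [div_div, div_mul_eq_mul_div, div_le_iff₀ (by positivity)]
      nlinarith
    · rw [div_mul_eq_mul_div, le_div_iff₀ h0]
      nlinarith

end BetheSix
end
end

section
/- Let ζ > 0 (regime Δ < −1, Δ = −cosh ζ). If m ↦ Q(m) is any function on [0,1/2) with Q(m) ∈ [0,π/2] and ∫_{−Q(m)}^{Q(m)} ρ(λ|Q(m))dλ = m for all m, then lim_{m→1/2⁻} (1 − 2m)/(π − 2Q(m)) = ρ(π/2), where ρ(x) := (1/(2ζ))·Σ_{n∈ℤ} 1/cosh(π(πn−x)/ζ). -/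
open MeasureTheory Filter
open scoped Real BigOperators

noncomputable section

namespace BetheSix

lemma hasSum_congr_loc {ι : Type*} {f g : ι → ℂ} {v : ℂ} (h : ∀ i, f i = g i) :
    HasSum f v ↔ HasSum g v := by
  rw [funext h]

open Complex in
lemma sech_fourier (w : ℝ) :
    ∫ t : ℝ, Complex.exp (I * w * t) * (1 / Real.cosh t : ℝ) = ((π / Real.cosh (π * w / 2) : ℝ) : ℂ) := by
  have hB : betaIntegral (1/2 + I * w / 2) (1/2 - I * w / 2) =
      ((π / Real.cosh (π * w / 2) : ℝ) : ℂ) := by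
    have h1 := Gamma_mul_Gamma_eq_betaIntegral (s := 1/2 + I * w / 2) (t := 1/2 - I * w / 2)
      (by simp) (by simp)
    have h2 := Complex.Gamma_mul_Gamma_one_sub (1/2 + I * w / 2)
    have e1 : (1 : ℂ) - (1/2 + I * w / 2) = 1/2 - I * w / 2 := by ring
    have e2 : (1/2 + I * w / 2 : ℂ) + (1/2 - I * w / 2) = 1 := by ring
    rw [e1] at h2
    rw [e2, Gamma_one, one_mul] at h1
    rw [← h1, h2]
    have e3 : (π : ℂ) * (1/2 + I * w / 2) = (π * w / 2 : ℂ) * I + π / 2 := by ring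
    rw [e3, Complex.sin_add_pi_div_two, Complex.cos_mul_I]
    push_cast
    rfl
  rw [← hB, betaIntegral, intervalIntegral.integral_of_le zero_le_one,
    MeasureTheory.integral_Ioc_eq_integral_Ioo, ← Real.range_sigmoid, ← Set.image_univ,
    MeasureTheory.integral_image_eq_integral_abs_deriv_smul MeasurableSet.univ
      (fun x _ => (Real.hasDerivAt_sigmoid x).hasDerivWithinAt)
      (Real.sigmoid_injective.injOn), MeasureTheory.setIntegral_univ]
  have key : ∀ t : ℝ, |Real.sigmoid (2 * t) * (1 - Real.sigmoid (2 * t))| •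
      ((Real.sigmoid (2 * t) : ℂ) ^ ((1/2 + I * w / 2 : ℂ) - 1) *
        (1 - (Real.sigmoid (2 * t) : ℂ)) ^ ((1/2 - I * w / 2 : ℂ) - 1)) =
      Complex.exp (I * w * t) * (1 / Real.cosh t : ℝ) / 2 := by
    intro t
    have hs := Real.sigmoid_pos (2 * t)
    have hs' : 0 < 1 - Real.sigmoid (2 * t) := by
      rw [← Real.sigmoid_neg]; exact Real.sigmoid_pos _
    have l1 : Real.log (1 - Real.sigmoid (2 * t)) = Real.log (Real.sigmoid (2 * t)) - 2 * t := by
      rw [← Real.sigmoid_neg, ← Real.sigmoid_mul_rexp_neg,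
        Real.log_mul hs.ne' (Real.exp_pos _).ne', Real.log_exp]; ring
    have l2 : (1 / Real.cosh t : ℝ) / 2 = Real.exp (Real.log (Real.sigmoid (2 * t)) - t) := by
      rw [Real.exp_sub, Real.exp_log hs, Real.sigmoid_def, Real.cosh_eq]
      have : Real.exp (-(2 * t)) = Real.exp (-t) * Real.exp (-t) := by
        rw [← Real.exp_add]; ring_nf
      have h0 : Real.exp t * Real.exp (-t) = 1 := by rw [← Real.exp_add]; simp
      rw [this]
      have p1 := Real.exp_pos t
      have p2 := Real.exp_pos (-t)
      field_simp
      linear_combination (Real.exp (-t)) * h0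
    have l3 : Real.sigmoid (2 * t) * (1 - Real.sigmoid (2 * t)) =
        Real.exp (Real.log (Real.sigmoid (2 * t)) + Real.log (1 - Real.sigmoid (2 * t))) := by
      rw [Real.exp_add, Real.exp_log hs, Real.exp_log hs']
    rw [abs_of_pos (mul_pos hs hs'), mul_div_assoc (Complex.exp _)]
    have : ((1 / Real.cosh t : ℝ) : ℂ) / 2 = ((1 / Real.cosh t / 2 : ℝ) : ℂ) := by push_cast; rfl
    rw [this, l2, l3]
    have : (1 : ℂ) - (Real.sigmoid (2 * t) : ℂ) = ((1 - Real.sigmoid (2 * t) : ℝ) : ℂ) := by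
      push_cast; rfl
    rw [this, Complex.cpow_def_of_ne_zero (by exact_mod_cast hs.ne'),
      Complex.cpow_def_of_ne_zero (by exact_mod_cast hs'.ne'), ← Complex.ofReal_log hs.le,
      ← Complex.ofReal_log hs'.le, Complex.real_smul, Complex.ofReal_exp, Complex.ofReal_exp,
      ← Complex.exp_add, ← Complex.exp_add, ← Complex.exp_add, l1]
    congr 1
    push_cast
    ring
  have h3 := MeasureTheory.Measure.integral_comp_mul_left (fun x : ℝ =>
    |Real.sigmoid x * (1 - Real.sigmoid x)| •
      ((Real.sigmoid x : ℂ) ^ ((1/2 + I * w / 2 : ℂ) - 1) *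
        (1 - (Real.sigmoid x : ℂ)) ^ ((1/2 - I * w / 2 : ℂ) - 1))) 2
  simp only [key] at h3
  rw [MeasureTheory.integral_div] at h3
  rw [abs_of_pos (by norm_num), Complex.real_smul] at h3
  push_cast at h3 ⊢
  linear_combination 2 * h3

lemma one_div_cosh_le (y : ℝ) : 1 / Real.cosh y ≤ 2 * Real.exp (-|y|) := by
  rw [← Real.cosh_abs, Real.cosh_eq, Real.exp_neg]
  have := Real.exp_pos |y|
  rw [div_le_iff₀ (by positivity)]
  field_simp
  nlinarith

lemma summable_exp_abs {t : ℝ} (ht : 0 < t) : Summable (fun k : ℤ => Real.exp (-t * |(k : ℝ)|)) := by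
  have hg : Summable (fun n : ℕ => Real.exp (-t * n)) := by
    have := summable_geometric_of_lt_one (Real.exp_pos (-t)).le (by simpa using ht)
    refine this.congr (fun n => ?_)
    rw [← Real.exp_nat_mul]; ring_nf
  apply Summable.of_nat_of_neg
  · simpa using hg
  · simpa using hg

/-- `F` is given by an absolutely convergent Fourier series with coefficients `a`. -/
def IsF (a : ℤ → ℝ) (F : ℝ → ℝ) : Prop :=
  Summable (fun k => |a k|) ∧
    ∀ x : ℝ, HasSum (fun k : ℤ => (a k : ℂ) * Complex.exp (2 * Complex.I * k * x)) (F x : ℂ)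

open Complex in
lemma isF_poisson {t : ℝ} (ht : 0 < t) :
    IsF (fun k => Real.exp (-t * |(k : ℝ)|) / π)
      (fun x => Real.sinh t / (2 * π * (Real.sin x ^ 2 + Real.sinh (t / 2) ^ 2))) := by
  refine ⟨((summable_exp_abs ht).div_const π).abs, fun x => ?_⟩
  set z : ℂ := Complex.exp (2 * I * x) with hz
  set z' : ℂ := Complex.exp (-(2 * I * x)) with hz'
  have hzz : z * z' = 1 := by rw [hz, hz', ← Complex.exp_add]; simp
  have hzc : z + z' = 2 * Real.cos (2 * x) := by
    rw [hz, hz']; push_cast; rw [Complex.cos]; ring_nf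
  have nz : ‖z‖ = 1 := by
    rw [hz, show (2 * I * x : ℂ) = ((2 * x : ℝ) : ℂ) * I by push_cast; ring]
    exact Complex.norm_exp_ofReal_mul_I _
  have nz' : ‖z'‖ = 1 := by
    rw [hz', show (-(2 * I * x) : ℂ) = ((-2 * x : ℝ) : ℂ) * I by push_cast; ring]
    exact Complex.norm_exp_ofReal_mul_I _
  set r : ℝ := Real.exp (-t) with hr
  have hr0 : 0 < r := Real.exp_pos _
  have hr1 : r < 1 := by simpa [hr] using ht
  have n1 : ‖(r : ℂ) * z‖ < 1 := by
    rw [norm_mul, nz, mul_one, Complex.norm_real, Real.norm_eq_abs, abs_of_pos hr0]; exact hr1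
  have n2 : ‖(r : ℂ) * z'‖ < 1 := by
    rw [norm_mul, nz', mul_one, Complex.norm_real, Real.norm_eq_abs, abs_of_pos hr0]; exact hr1
  have h1 := (hasSum_geometric_of_norm_lt_one n1).div_const (π : ℂ)
  have h2 := ((hasSum_geometric_of_norm_lt_one n2).mul_left ((r : ℂ) * z')).div_const (π : ℂ)
  have d1 : (1 : ℂ) - r * z ≠ 0 := by
    intro h
    have : (r : ℂ) * z = 1 := by linear_combination -h
    rw [this] at n1; simp at n1
  have d2 : (1 : ℂ) - r * z' ≠ 0 := by
    intro h
    have : (r : ℂ) * z' = 1 := by linear_combination -h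
    rw [this] at n2; simp at n2
  have hv : ((Real.sinh t / (2 * π * (Real.sin x ^ 2 + Real.sinh (t / 2) ^ 2)) : ℝ) : ℂ) =
      (1 - r * z)⁻¹ / π + r * z' * (1 - r * z')⁻¹ / π := by
    have e1 : Real.sin x ^ 2 + Real.sinh (t / 2) ^ 2 = (Real.cosh t - Real.cos (2 * x)) / 2 := by
      have a1 := Real.cos_two_mul x
      have a2 := Real.sin_sq_add_cos_sq x
      have a3 := Real.cosh_two_mul (t / 2)
      have a4 := Real.cosh_sq (t / 2)
      rw [show 2 * (t / 2) = t by ring] at a3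
      linarith
    have e2 : Real.sinh t = (1 - r ^ 2) / (2 * r) := by
      rw [Real.sinh_eq, ← hr]
      have : Real.exp t = 1 / r := by rw [hr, Real.exp_neg]; simp
      rw [this]; field_simp
    have e3 : Real.cosh t = (1 + r ^ 2) / (2 * r) := by
      rw [Real.cosh_eq, ← hr]
      have : Real.exp t = 1 / r := by rw [hr, Real.exp_neg]; simp
      rw [this]; field_simp
    have hpos : 0 < 1 + r ^ 2 - 2 * r * Real.cos (2 * x) := by
      have := Real.cos_le_one (2 * x)
      nlinarith [sq_pos_of_pos (sub_pos.2 hr1)]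
    have e4 : Real.sinh t / (2 * π * (Real.sin x ^ 2 + Real.sinh (t / 2) ^ 2)) =
        (1 - r ^ 2) / (1 + r ^ 2 - 2 * r * Real.cos (2 * x)) / π := by
      rw [e1, e2, e3]
      have : (1 + r ^ 2) / (2 * r) - Real.cos (2 * x) =
        (1 + r ^ 2 - 2 * r * Real.cos (2 * x)) / (2 * r) := by field_simp
      rw [this]
      have := hpos.ne'
      have := Real.pi_pos.ne'
      field_simp
    rw [e4, ← add_div]
    push_cast
    congr 1
    have e5 : (1 : ℂ) + r ^ 2 - 2 * r * Complex.cos (2 * x) = (1 - r * z) * (1 - r * z') := by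
      have : 2 * Complex.cos (2 * x) = z + z' := by rw [hzc]; push_cast; rfl
      linear_combination (-(r : ℂ)) * this - (r : ℂ) ^ 2 * hzz
    rw [e5]
    field_simp
    linear_combination ((r : ℂ) ^ 2) * hzz
  rw [hv]
  apply HasSum.of_nat_of_neg_add_one
  · refine (hasSum_congr_loc (fun n => ?_)).mpr h1
    rw [mul_pow, hr, hz, ← Complex.exp_nat_mul, ← Complex.ofReal_pow, ← Real.exp_nat_mul]
    push_cast
    rw [abs_of_nonneg (by positivity)]
    rw [Complex.ofReal_natCast]
    ring_nf
  · refine (hasSum_congr_loc (fun n => ?_)).mpr h2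
    rw [← _root_.pow_succ', mul_pow, hr, hz', ← Complex.exp_nat_mul, ← Complex.ofReal_pow, ← Real.exp_nat_mul]
    push_cast
    rw [abs_of_nonpos (by have : (0 : ℝ) ≤ n := by positivity
                          linarith)]
    push_cast
    ring_nf

lemma norm_exp_two (k : ℤ) (x : ℝ) : ‖Complex.exp (2 * Complex.I * k * x)‖ = 1 := by
  rw [show (2 * Complex.I * k * x : ℂ) = ((2 * k * x : ℝ) : ℂ) * Complex.I by push_cast; ring]
  exact Complex.norm_exp_ofReal_mul_I _

lemma IsF.eq_of {a : ℤ → ℝ} {F : ℝ → ℝ} (h : IsF a F) {x v : ℝ}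
    (hv : HasSum (fun k : ℤ => (a k : ℂ) * Complex.exp (2 * Complex.I * k * x)) (v : ℂ)) :
    F x = v := by
  exact_mod_cast (h.2 x).unique hv

lemma IsF.continuous {a : ℤ → ℝ} {F : ℝ → ℝ} (h : IsF a F) : Continuous F := by
  have : F = fun x : ℝ => (∑' k : ℤ, (a k : ℂ) * Complex.exp (2 * Complex.I * k * x)).re := by
    ext x
    rw [(h.2 x).tsum_eq, Complex.ofReal_re]
  rw [this]
  refine Complex.continuous_re.comp (continuous_tsum (fun k => by fun_prop) h.1 (fun k x => ?_))
  rw [norm_mul, norm_exp_two, mul_one, Complex.norm_real, Real.norm_eq_abs]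

lemma IsF.periodic {a : ℤ → ℝ} {F : ℝ → ℝ} (h : IsF a F) : Function.Periodic F π := by
  intro x
  apply h.eq_of
  refine (hasSum_congr_loc (fun k => ?_)).mpr (h.2 x)
  congr 1
  rw [Complex.exp_eq_exp_iff_exists_int]
  exact ⟨k, by push_cast; ring⟩

lemma IsF.hasSum_integral {a : ℤ → ℝ} {F : ℝ → ℝ} (h : IsF a F) {φ : ℝ → ℂ} (hφ : Continuous φ)
    {s : ℝ → ℝ} (hs : Continuous s) (c d : ℝ) :
    HasSum (fun k : ℤ => (a k : ℂ) * ∫ m in c..d, φ m * Complex.exp (2 * Complex.I * k * (s m)))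
      (∫ m in c..d, φ m * (F (s m) : ℂ)) := by
  have := intervalIntegral.hasSum_integral_of_dominated_convergence (μ := volume) (a := c) (b := d)
    (F := fun (k : ℤ) m => (a k : ℂ) * (φ m * Complex.exp (2 * Complex.I * k * (s m))))
    (f := fun m => φ m * (F (s m) : ℂ)) (fun k m => |a k| * ‖φ m‖) ?_ ?_ ?_ ?_ ?_
  · refine (hasSum_congr_loc (fun k => ?_)).mpr this
    rw [intervalIntegral.integral_const_mul]
  · intro k
    exact (by fun_prop : Continuous fun m => (a k : ℂ) *
      (φ m * Complex.exp (2 * Complex.I * k * (s m)))).aestronglyMeasurable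
  · intro k
    refine Eventually.of_forall (fun m _ => ?_)
    rw [norm_mul, norm_mul, norm_exp_two, mul_one, Complex.norm_real, Real.norm_eq_abs]
  · exact Eventually.of_forall (fun m _ => h.1.mul_right _)
  · simp_rw [tsum_mul_right]
    exact (by fun_prop : Continuous fun m => (∑' k, |a k|) * ‖φ m‖).intervalIntegrable _ _
  · refine Eventually.of_forall (fun m _ => ?_)
    refine (hasSum_congr_loc (fun k => ?_)).mpr ((h.2 (s m)).mul_left (φ m))
    ring

lemma integral_char (c l y : ℝ) (j k : ℤ) :
    ∫ m in c..(c + π), Complex.exp (2 * Complex.I * k * ((m - y : ℝ) : ℂ)) *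
      Complex.exp (2 * Complex.I * j * ((l - m : ℝ) : ℂ)) =
      if j = k then π * Complex.exp (2 * Complex.I * k * ((l - y : ℝ) : ℂ)) else 0 := by
  have e : ∀ m : ℝ, Complex.exp (2 * Complex.I * k * ((m - y : ℝ) : ℂ)) *
      Complex.exp (2 * Complex.I * j * ((l - m : ℝ) : ℂ)) =
      Complex.exp (2 * Complex.I * (j * l - k * y)) *
        Complex.exp ((2 * Complex.I * (k - j)) * m) := by
    intro m
    rw [← Complex.exp_add, ← Complex.exp_add]
    congr 1
    push_cast
    ring
  simp_rw [e]
  rw [intervalIntegral.integral_const_mul]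
  split_ifs with hjk
  · subst hjk
    simp
    rw [mul_comm]
    congr 2
    ring
  · have hne : (2 * Complex.I * (k - j) : ℂ) ≠ 0 := by
      have : (k : ℂ) - j ≠ 0 := by
        rw [sub_ne_zero]; exact_mod_cast (Ne.symm hjk)
      simp [this]
    rw [integral_exp_mul_complex hne]
    have : Complex.exp (2 * Complex.I * (k - j) * ((c + π : ℝ) : ℂ)) =
        Complex.exp (2 * Complex.I * (k - j) * (c : ℂ)) := by
      rw [Complex.exp_eq_exp_iff_exists_int]
      exact ⟨k - j, by push_cast; ring⟩
    rw [this]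
    simp

lemma conv_hasSum {a b : ℤ → ℝ} {F G : ℝ → ℝ} (hF : IsF a F) (hG : IsF b G) (c l y : ℝ) :
    HasSum (fun k : ℤ => ((π * a k * b k : ℝ) : ℂ) *
        Complex.exp (2 * Complex.I * k * ((l - y : ℝ) : ℂ)))
      ((∫ m in c..(c + π), F (l - m) * G (m - y) : ℝ) : ℂ) := by
  have h1 : ∀ k : ℤ, ∫ m in c..(c + π), (F (l - m) : ℂ) *
      Complex.exp (2 * Complex.I * k * ((m - y : ℝ) : ℂ)) =
      a k * (π * Complex.exp (2 * Complex.I * k * ((l - y : ℝ) : ℂ))) := by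
    intro k
    have := hF.hasSum_integral (φ := fun m => Complex.exp (2 * Complex.I * k * ((m - y : ℝ) : ℂ)))
      (by fun_prop) (s := fun m => l - m) (by fun_prop) c (c + π)
    simp only [integral_char] at this
    have h2 := hasSum_ite_eq k ((a k : ℂ) * (π * Complex.exp (2 * Complex.I * k * ((l - y : ℝ) : ℂ))))
    have h3 := this.unique ((hasSum_congr_loc (fun j => ?_)).mpr h2)
    · rw [← h3]
      congr 1
      ext m
      ring
    · split_ifs with hj
      · rw [hj]
      · simp
  have := hG.hasSum_integral (φ := fun m => (F (l - m) : ℂ))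
      (Complex.continuous_ofReal.comp (hF.continuous.comp (by fun_prop)))
      (s := fun m => m - y) (by fun_prop) c (c + π)
  simp only [h1] at this
  have e : ((∫ m in c..(c + π), F (l - m) * G (m - y) : ℝ) : ℂ) =
      ∫ m in c..(c + π), (F (l - m) : ℂ) * (G (m - y) : ℂ) := by
    rw [← intervalIntegral.integral_ofReal]
    simp
  rw [e]
  refine (hasSum_congr_loc (fun k => ?_)).mpr this
  push_cast
  ring

lemma IsF.integral {a : ℤ → ℝ} {F : ℝ → ℝ} (hF : IsF a F) (c l : ℝ) :
    ∫ m in c..(c + π), F (l - m) = π * a 0 := by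
  have h1 : IsF (fun k => if k = 0 then 1 else 0) (fun _ => 1) := by
    refine ⟨?_, fun x => ?_⟩
    · refine (hasSum_ite_eq (0 : ℤ) (1 : ℝ)).summable.congr (fun k => ?_)
      split_ifs with h <;> simp [h]
    · refine (hasSum_congr_loc (fun k => ?_)).mpr (hasSum_ite_eq (0 : ℤ) ((1 : ℝ) : ℂ))
      split_ifs with h <;> simp [h]
  have := conv_hasSum hF h1 c l 0
  have h2 : HasSum (fun k : ℤ => ((π * a k * (if k = 0 then 1 else 0) : ℝ) : ℂ) *
        Complex.exp (2 * Complex.I * k * ((l - 0 : ℝ) : ℂ))) ((π * a 0 : ℝ) : ℂ) := by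
    refine (hasSum_congr_loc (fun k => ?_)).mpr (hasSum_ite_eq (0 : ℤ) ((π * a 0 : ℝ) : ℂ))
    split_ifs with h <;> simp [h]
  have h3 := this.unique h2
  simp only [mul_one] at h3
  exact_mod_cast h3

lemma rho_summand_isBigO {c : ℝ} (hc : 0 < c) :
    (fun x : ℝ => ((1 / Real.cosh (c * x) : ℝ) : ℂ)) =O[cocompact ℝ] fun x : ℝ => |x| ^ (-2 : ℝ) := by
  refine Asymptotics.IsBigO.of_bound (4 / c ^ 2) ?_
  filter_upwards [(isCompact_singleton (x := (0 : ℝ))).compl_mem_cocompact] with x hx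
  have hx : x ≠ 0 := by simpa using hx
  have hp := Real.cosh_pos (c * x)
  rw [Complex.norm_real, Real.norm_of_nonneg (by positivity), Real.norm_of_nonneg (by positivity)]
  refine (one_div_cosh_le _).trans ?_
  have h1 := Real.quadratic_le_exp_of_nonneg (abs_nonneg (c * x))
  have h2 : |x| ^ (-2 : ℝ) = 1 / x ^ 2 := by
    rw [Real.rpow_neg (abs_nonneg _)]
    norm_num
  rw [h2, Real.exp_neg]
  have h3 : (c * x) ^ 2 / 2 ≤ Real.exp |c * x| := by
    have := abs_nonneg (c * x)
    have := sq_abs (c * x)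
    linarith
  have h4 : 0 < (c * x) ^ 2 := by positivity
  have h5 : (Real.exp |c * x|)⁻¹ ≤ ((c * x) ^ 2 / 2)⁻¹ := inv_anti₀ (by positivity) h3
  calc _ ≤ 2 * ((c * x) ^ 2 / 2)⁻¹ := by linarith
    _ = _ := by field_simp; norm_num

lemma summable_rho_coeff {ζ : ℝ} (hζ : 0 < ζ) :
    Summable (fun k : ℤ => 1 / (2 * π * Real.cosh (ζ * k))) := by
  refine Summable.of_nonneg_of_le (fun k => ?_) (fun k => ?_) ((summable_exp_abs hζ).div_const π)
  · have := Real.cosh_pos (ζ * k)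
    positivity
  · have := one_div_cosh_le (ζ * k)
    rw [abs_mul, abs_of_pos hζ] at this
    have h2 : 1 / (2 * π * Real.cosh (ζ * k)) = (1 / Real.cosh (ζ * k)) / (2 * π) := by
      have := Real.cosh_pos (ζ * k)
      field_simp
    rw [h2, div_le_div_iff₀ (by positivity) (by positivity)]
    have := Real.pi_pos
    rw [neg_mul]
    nlinarith

open FourierTransform in
lemma fourier_rho {ζ : ℝ} (hζ : 0 < ζ) (k : ℝ) :
    𝓕 (fun t : ℝ => ((1 / Real.cosh (π ^ 2 / ζ * t) : ℝ) : ℂ)) k =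
      ((2 * ζ * (1 / (2 * π * Real.cosh (ζ * k))) : ℝ) : ℂ) := by
  rw [Real.fourier_real_eq_integral_exp_smul]
  have h := MeasureTheory.Measure.integral_comp_mul_left (fun t : ℝ =>
    Complex.exp (Complex.I * ((-2 * k * ζ / π : ℝ) : ℂ) * t) * (1 / Real.cosh t : ℝ)) (π ^ 2 / ζ)
  rw [sech_fourier] at h
  have hp := Real.pi_pos
  rw [abs_of_pos (by positivity)] at h
  have e1 : π * (-2 * k * ζ / π) / 2 = -(ζ * k) := by field_simp
  rw [e1, Real.cosh_neg] at h
  have e2 : ((2 * ζ * (1 / (2 * π * Real.cosh (ζ * k))) : ℝ) : ℂ) =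
      (π ^ 2 / ζ)⁻¹ • ((π / Real.cosh (ζ * k) : ℝ) : ℂ) := by
    rw [Complex.real_smul, ← Complex.ofReal_mul]
    congr 1
    have := Real.cosh_pos (ζ * k)
    field_simp
  rw [e2, ← h]
  congr 1
  ext t
  rw [smul_eq_mul]
  congr 2
  push_cast
  have : (π : ℂ) ≠ 0 := by exact_mod_cast hp.ne'
  have : (ζ : ℂ) ≠ 0 := by exact_mod_cast hζ.ne'
  field_simp

lemma isF_rho {ζ : ℝ} (hζ : 0 < ζ) :
    IsF (fun k => 1 / (2 * π * Real.cosh (ζ * k))) (rhoMs ζ) := by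
  refine ⟨(summable_rho_coeff hζ).abs, fun x => ?_⟩
  have hp := Real.pi_pos
  have hc : Continuous (fun t : ℝ => ((1 / Real.cosh (π ^ 2 / ζ * t) : ℝ) : ℂ)) := by
    refine Complex.continuous_ofReal.comp (Continuous.div continuous_const (by fun_prop)
      (fun t => (Real.cosh_pos _).ne'))
  have h := Real.tsum_eq_tsum_fourier_of_rpow_decay_of_summable hc one_lt_two
    (rho_summand_isBigO (by positivity)) (by
      simp only [fourier_rho hζ]
      exact_mod_cast (summable_rho_coeff hζ).mul_left (2 * ζ)) (x / π)
  simp only [fourier_rho hζ] at h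
  have e : (rhoMs ζ x : ℂ) = ∑' k : ℤ, ((1 / (2 * π * Real.cosh (ζ * k)) : ℝ) : ℂ) *
      Complex.exp (2 * Complex.I * k * x) := by
    have hζ' : (ζ : ℂ) ≠ 0 := by exact_mod_cast hζ.ne'
    have e1 : (rhoMs ζ x : ℂ) = (1 / (2 * ζ)) *
        ∑' n : ℤ, ((1 / Real.cosh (π ^ 2 / ζ * (x / π + n)) : ℝ) : ℂ) := by
      rw [rhoMs, ← Complex.ofReal_tsum, ← (Equiv.neg ℤ).tsum_eq]
      push_cast
      congr 2
      ext n
      congr 1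
      rw [← Complex.cosh_neg]
      congr 1
      have : (π : ℂ) ≠ 0 := by exact_mod_cast hp.ne'
      simp only [Equiv.neg_apply]
      push_cast
      field_simp
      ring
    rw [e1, h, ← tsum_mul_left]
    congr 1
    ext k
    rw [fourier_coe_apply]
    have : (π : ℂ) ≠ 0 := by exact_mod_cast hp.ne'
    have e3 : (2 * π * Complex.I * k * ((x / π : ℝ) : ℂ) / ((1 : ℝ) : ℂ)) = 2 * Complex.I * k * x := by
      push_cast
      field_simp
    rw [e3]
    push_cast
    field_simp
  rw [e]
  apply Summable.hasSum
  refine Summable.of_norm_bounded ((summable_rho_coeff hζ).abs) (fun k => ?_)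
  rw [norm_mul, norm_exp_two, mul_one, Complex.norm_real, Real.norm_eq_abs]

lemma rho_pos_s19 {ζ : ℝ} (hζ : 0 < ζ) (x : ℝ) : 0 < rhoMs ζ x := by
  have hs : Summable (fun n : ℤ => 1 / Real.cosh (π * (π * n - x) / ζ)) := by
    have hz : 0 < π ^ 2 / ζ := by positivity
    refine Summable.of_nonneg_of_le (fun n => ?_) (fun n => ?_)
      ((summable_exp_abs hz).mul_left (2 * Real.exp (π * |x| / ζ)))
    · have := Real.cosh_pos (π * (π * n - x) / ζ)
      positivity
    · refine (one_div_cosh_le _).trans ?_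
      rw [mul_assoc, ← Real.exp_add]
      gcongr
      have h1 := abs_sub_abs_le_abs_sub (π * n) x
      rw [abs_mul, abs_of_pos Real.pi_pos] at h1
      rw [abs_div, abs_mul, abs_of_pos Real.pi_pos, abs_of_pos hζ]
      have h2 : π * (π * |(n : ℝ)| - |x|) / ζ ≤ π * |π * n - x| / ζ := by gcongr
      have h3 : π * (π * |(n : ℝ)| - |x|) / ζ = π ^ 2 / ζ * |(n : ℝ)| - π * |x| / ζ := by ring
      linarith
  rw [rhoMs]
  refine mul_pos (by positivity) (hs.tsum_pos (fun n => ?_) 0 ?_)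
  · have := Real.cosh_pos (π * (π * n - x) / ζ)
    positivity
  · have := Real.cosh_pos (π * (π * (0 : ℤ) - x) / ζ)
    positivity

lemma isF_K {ζ : ℝ} (hζ : 0 < ζ) :
    IsF (fun k => Real.exp (-(2 * ζ) * |(k : ℝ)|) / π) (Kms ζ) := by
  have := isF_poisson (t := 2 * ζ) (by positivity)
  rw [show 2 * ζ / 2 = ζ by ring] at this
  exact this

lemma isF_xi {ζ : ℝ} (hζ : 0 < ζ) :
    IsF (fun k => Real.exp (-ζ * |(k : ℝ)|) / π) (xiMs ζ) := isF_poisson hζ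

/-- The resolvent kernel on the full circle. -/
def JJ (ζ x : ℝ) : ℝ := ∫ m in (0 : ℝ)..(0 + π), xiMs ζ (x - m) * rhoMs ζ (m - 0)

def jc (ζ : ℝ) (k : ℤ) : ℝ :=
  π * (Real.exp (-ζ * |(k : ℝ)|) / π) * (1 / (2 * π * Real.cosh (ζ * k)))

lemma isF_J {ζ : ℝ} (hζ : 0 < ζ) : IsF (jc ζ) (JJ ζ) := by
  refine ⟨?_, fun x => ?_⟩
  · refine Summable.of_nonneg_of_le (fun k => abs_nonneg _) (fun k => ?_) (summable_rho_coeff hζ)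
    have := Real.cosh_pos (ζ * k)
    have hp := Real.pi_pos
    rw [jc, abs_of_nonneg (by positivity)]
    have h1 : Real.exp (-ζ * |(k : ℝ)|) ≤ 1 := by
      rw [Real.exp_le_one_iff]
      nlinarith [abs_nonneg (k : ℝ)]
    rw [mul_div_cancel₀ _ hp.ne']
    exact mul_le_of_le_one_left (by positivity) h1
  · have := conv_hasSum (isF_xi hζ) (isF_rho hζ) 0 x 0
    rw [sub_zero x] at this
    exact this

lemma xi_pos {ζ : ℝ} (hζ : 0 < ζ) (x : ℝ) : 0 < xiMs ζ x := by
  have h1 : 0 < Real.sinh ζ := Real.sinh_pos_iff.2 hζ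
  have h2 : 0 < Real.sinh (ζ / 2) := Real.sinh_pos_iff.2 (by positivity)
  have := Real.pi_pos
  rw [xiMs]
  positivity

lemma J_nonneg {ζ : ℝ} (hζ : 0 < ζ) (x : ℝ) : 0 ≤ JJ ζ x := by
  refine intervalIntegral.integral_nonneg (by linarith [Real.pi_pos]) (fun m _ => ?_)
  exact (mul_pos (xi_pos hζ _) (rho_pos_s19 hζ _)).le

lemma exp_cosh_id (ζ : ℝ) (k : ℤ) : Real.exp (-(2 * ζ) * |(k : ℝ)|) =
    Real.exp (-ζ * |(k : ℝ)|) * Real.exp (-ζ * |(k : ℝ)|) := by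
  rw [← Real.exp_add]; ring_nf

lemma cosh_id {ζ : ℝ} (hζ : 0 < ζ) (k : ℤ) : 2 * Real.cosh (ζ * k) * Real.exp (-ζ * |(k : ℝ)|) =
    1 + Real.exp (-ζ * |(k : ℝ)|) * Real.exp (-ζ * |(k : ℝ)|) := by
  rw [← Real.cosh_abs, abs_mul, abs_of_pos hζ, Real.cosh_eq]
  have : Real.exp (ζ * |(k : ℝ)|) * Real.exp (-ζ * |(k : ℝ)|) = 1 := by
    rw [← Real.exp_add]; simp
  rw [neg_mul] at *
  linear_combination this

lemma K_rho {ζ : ℝ} (hζ : 0 < ζ) (c l : ℝ) :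
    ∫ m in c..(c + π), Kms ζ (l - m) * rhoMs ζ m = xiMs ζ l - rhoMs ζ l := by
  have h := conv_hasSum (isF_K hζ) (isF_rho hζ) c l 0
  have h2 := ((isF_xi hζ).2 l).sub ((isF_rho hζ).2 l)
  have h3 := h.unique ((hasSum_congr_loc (fun k => ?_)).mpr h2)
  · simp only [sub_zero] at h3
    exact_mod_cast h3
  · rw [sub_zero, ← sub_mul, ← Complex.ofReal_sub]
    congr 2
    have e1 := exp_cosh_id ζ k
    have e2 := cosh_id hζ k
    have := Real.cosh_pos (ζ * k)
    have hp := Real.pi_pos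
    simp only [e1]
    generalize Real.exp (-ζ * |(k : ℝ)|) = E at e2 ⊢
    field_simp
    linear_combination -e2

lemma K_J {ζ : ℝ} (hζ : 0 < ζ) (c l y : ℝ) :
    ∫ m in c..(c + π), Kms ζ (l - m) * JJ ζ (m - y) = Kms ζ (l - y) - JJ ζ (l - y) := by
  have h := conv_hasSum (isF_K hζ) (isF_J hζ) c l y
  have h2 := ((isF_K hζ).2 (l - y)).sub ((isF_J hζ).2 (l - y))
  have h3 := h.unique ((hasSum_congr_loc (fun k => ?_)).mpr h2)
  · exact_mod_cast h3
  · rw [← sub_mul, ← Complex.ofReal_sub]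
    congr 2
    have e1 := exp_cosh_id ζ k
    have e2 := cosh_id hζ k
    have := Real.cosh_pos (ζ * k)
    have hp := Real.pi_pos
    simp only [e1, jc]
    generalize Real.exp (-ζ * |(k : ℝ)|) = E at e2 ⊢
    field_simp
    linear_combination (-E) * e2

lemma J_int {ζ : ℝ} (hζ : 0 < ζ) (c l : ℝ) : ∫ m in c..(c + π), JJ ζ (l - m) = 1 / 2 := by
  rw [(isF_J hζ).integral, jc]
  have hp := Real.pi_pos
  simp

lemma IsF.integral' {a : ℤ → ℝ} {F : ℝ → ℝ} (hF : IsF a F) (c y : ℝ) :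
    ∫ m in c..(c + π), F (m - y) = π * a 0 := by
  have h := hF.integral c (2 * c + π - y)
  rw [← h, intervalIntegral.integral_comp_sub_left, intervalIntegral.integral_comp_sub_right]
  congr 1 <;> ring

lemma J_int' {ζ : ℝ} (hζ : 0 < ζ) (c y : ℝ) : ∫ m in c..(c + π), JJ ζ (m - y) = 1 / 2 := by
  rw [(isF_J hζ).integral', jc]
  have hp := Real.pi_pos
  simp

lemma rho_int_s19 {ζ : ℝ} (hζ : 0 < ζ) (c : ℝ) : ∫ m in c..(c + π), rhoMs ζ m = 1 / 2 := by
  have := (isF_rho hζ).integral' c 0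
  simp only [sub_zero] at this
  rw [this]
  have hp := Real.pi_pos
  simp

lemma rho_bounds {ζ : ℝ} (hζ : 0 < ζ) : ∃ c M : ℝ, 0 < c ∧ ∀ x, c ≤ rhoMs ζ x ∧ rhoMs ζ x ≤ M := by
  have hc := (isF_rho hζ).continuous
  have hne : (Set.Icc 0 π).Nonempty := ⟨0, le_refl _, Real.pi_pos.le⟩
  obtain ⟨x0, -, h0⟩ := isCompact_Icc.exists_isMinOn hne hc.continuousOn
  obtain ⟨x1, -, h1⟩ := isCompact_Icc.exists_isMaxOn hne hc.continuousOn
  refine ⟨rhoMs ζ x0, rhoMs ζ x1, rho_pos_s19 hζ _, fun x => ?_⟩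
  obtain ⟨y, hy, hxy⟩ := (isF_rho hζ).periodic.exists_mem_Ico₀ Real.pi_pos x
  rw [hxy]
  exact ⟨h0 ⟨hy.1, hy.2.le⟩, h1 ⟨hy.1, hy.2.le⟩⟩

lemma J_bound {ζ : ℝ} (hζ : 0 < ζ) : ∃ M : ℝ, 0 ≤ M ∧ ∀ x, JJ ζ x ≤ M := by
  have hc := (isF_J hζ).continuous
  have hne : (Set.Icc 0 π).Nonempty := ⟨0, le_refl _, Real.pi_pos.le⟩
  obtain ⟨x1, -, h1⟩ := isCompact_Icc.exists_isMaxOn hne hc.continuousOn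
  refine ⟨JJ ζ x1, J_nonneg hζ _, fun x => ?_⟩
  obtain ⟨y, hy, hxy⟩ := (isF_J hζ).periodic.exists_mem_Ico₀ Real.pi_pos x
  rw [hxy]
  exact h1 ⟨hy.1, hy.2.le⟩

lemma J_part {ζ q : ℝ} (hζ : 0 < ζ) (hq : q ∈ Set.Icc 0 (π / 2)) (x : ℝ) :
    ∫ y in q..(π - q), JJ ζ (x - y) ≤ 1 / 2 := by
  have hc := (isF_J hζ).continuous
  rw [← J_int hζ q x]
  refine intervalIntegral.integral_mono_interval le_rfl (by linarith [hq.2]) (by linarith [hq.1])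
    (Eventually.of_forall fun y => J_nonneg hζ _)
    ((by fun_prop : Continuous fun y => JJ ζ (x - y)).intervalIntegrable _ _)

lemma J_op_lower {ζ q : ℝ} (hζ : 0 < ζ) (hq : q ∈ Set.Icc 0 (π / 2)) (x : ℝ) {φ : ℝ → ℝ}
    (hφ : Continuous φ) {C : ℝ} (hC : 0 ≤ C) (h : ∀ y, -C ≤ φ y) :
    -(C / 2) ≤ ∫ y in q..(π - q), JJ ζ (x - y) * φ y := by
  have hc := (isF_J hζ).continuous
  have h1 : ∫ y in q..(π - q), JJ ζ (x - y) * (-C) ≤ ∫ y in q..(π - q), JJ ζ (x - y) * φ y := by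
    refine intervalIntegral.integral_mono_on (by linarith [hq.2])
      ((by fun_prop : Continuous fun y => JJ ζ (x - y) * (-C)).intervalIntegrable _ _)
      ((by fun_prop : Continuous fun y => JJ ζ (x - y) * φ y).intervalIntegrable _ _)
      (fun y _ => mul_le_mul_of_nonneg_left (h y) (J_nonneg hζ _))
  rw [intervalIntegral.integral_mul_const] at h1
  have := J_part hζ hq x
  nlinarith

lemma J_op_abs {ζ q : ℝ} (hζ : 0 < ζ) (hq : q ∈ Set.Icc 0 (π / 2)) (x : ℝ) {φ : ℝ → ℝ}
    (hφ : Continuous φ) {C : ℝ} (hC : 0 ≤ C) (h : ∀ y, |φ y| ≤ C) :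
    |∫ y in q..(π - q), JJ ζ (x - y) * φ y| ≤ C / 2 := by
  have h1 := J_op_lower hζ hq x hφ hC (fun y => (abs_le.1 (h y)).1)
  have h2 := J_op_lower hζ hq x hφ.neg hC (fun y => by
    have := (abs_le.1 (h y)).2
    simp only [Pi.neg_apply]; linarith)
  simp only [Pi.neg_apply, mul_neg, intervalIntegral.integral_neg] at h2
  rw [abs_le]
  constructor <;> linarith

lemma J_op_cont {ζ q : ℝ} (hζ : 0 < ζ) {φ : ℝ → ℝ} (hφ : Continuous φ) :
    Continuous (fun x => ∫ y in q..(π - q), JJ ζ (x - y) * φ y) := by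
  have hc := (isF_J hζ).continuous
  exact intervalIntegral.continuous_parametric_intervalIntegral_of_continuous' (by fun_prop) _ _

lemma exists_fix {ζ q : ℝ} (hζ : 0 < ζ) (hq : q ∈ Set.Icc 0 (π / 2)) :
    ∃ f : BoundedContinuousFunction ℝ ℝ, ∀ x, f x = rhoMs ζ x +
      ∫ y in q..(π - q), JJ ζ (x - y) * f y := by
  obtain ⟨c, M, hc, hcM⟩ := rho_bounds hζ
  have hJc := (isF_J hζ).continuous
  let T : BoundedContinuousFunction ℝ ℝ → BoundedContinuousFunction ℝ ℝ := fun φ =>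
    BoundedContinuousFunction.ofNormedAddCommGroup
      (fun x => rhoMs ζ x + ∫ y in q..(π - q), JJ ζ (x - y) * φ y)
      ((isF_rho hζ).continuous.add (J_op_cont hζ φ.continuous)) (M + ‖φ‖ / 2) (fun x => by
        refine (norm_add_le _ _).trans (add_le_add ?_ ?_)
        · rw [Real.norm_of_nonneg (rho_pos_s19 hζ _).le]; exact (hcM x).2
        · exact J_op_abs hζ hq x φ.continuous (norm_nonneg _) (fun y => φ.norm_coe_le_norm y))
  have hT : ContractingWith (1 / 2) T := by
    refine ⟨by rw [← NNReal.coe_lt_coe]; norm_num, LipschitzWith.of_dist_le_mul fun φ ψ => ?_⟩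
    rw [BoundedContinuousFunction.dist_le (by positivity)]
    intro x
    have e : T φ x - T ψ x = ∫ y in q..(π - q), JJ ζ (x - y) * (φ - ψ) y := by
      have h1 := φ.continuous
      have h2 := ψ.continuous
      simp only [T, BoundedContinuousFunction.coe_ofNormedAddCommGroup, add_sub_add_left_eq_sub,
        BoundedContinuousFunction.coe_sub, Pi.sub_apply, mul_sub]
      rw [intervalIntegral.integral_sub]
      · exact (by fun_prop : Continuous fun y => JJ ζ (x - y) * φ y).intervalIntegrable _ _
      · exact (by fun_prop : Continuous fun y => JJ ζ (x - y) * ψ y).intervalIntegrable _ _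
    rw [Real.dist_eq, e, dist_eq_norm]
    refine (J_op_abs hζ hq x (φ - ψ).continuous (norm_nonneg _)
      (fun y => (φ - ψ).norm_coe_le_norm y)).trans ?_
    push_cast
    linarith
  refine ⟨hT.fixedPoint T, fun x => ?_⟩
  have := hT.fixedPoint_isFixedPt (f := T)
  conv_lhs => rw [← this.eq]
  rfl

lemma exists_sol {ζ q c M : ℝ} (hζ : 0 < ζ) (hq : q ∈ Set.Icc 0 (π / 2)) (hc : 0 < c)
    (hcM : ∀ x, c ≤ rhoMs ζ x ∧ rhoMs ζ x ≤ M) :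
    ∃ f : ℝ → ℝ, Continuous f ∧ Function.Periodic f π ∧ (∀ x, f x = rhoMs ζ x +
      ∫ y in q..(π - q), JJ ζ (x - y) * f y) ∧ (∀ x, c ≤ f x) ∧ ∀ x, |f x| ≤ 2 * M := by
  obtain ⟨f, hf⟩ := exists_fix hζ hq
  refine ⟨f, f.continuous, fun x => ?_, hf, ?_, fun x => ?_⟩
  · rw [hf, hf x, (isF_rho hζ).periodic x]
    congr 2
    ext y
    rw [show x + π - y = (x - y) + π by ring, (isF_J hζ).periodic]
  · have hb : BddBelow (Set.range f) := ⟨-‖f‖, by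
      rintro _ ⟨x, rfl⟩
      exact (abs_le.1 (f.norm_coe_le_norm x)).1⟩
    have hI : ∀ x, (⨅ y, f y) ≤ f x := fun x => ciInf_le hb x
    have hI0 : 0 ≤ ⨅ y, f y := by
      by_contra hneg
      push Not at hneg
      have : c + (⨅ y, f y) / 2 ≤ ⨅ y, f y := by
        refine le_ciInf fun x => ?_
        have := J_op_lower hζ hq x f.continuous (C := -⨅ y, f y) (by linarith)
          (fun y => by rw [neg_neg]; exact hI y)
        rw [hf x]
        linarith [(hcM x).1]
      linarith
    intro x
    have := J_op_lower hζ hq x f.continuous (C := 0) le_rfl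
          (fun y => by rw [neg_zero]; exact hI0.trans (hI y))
    rw [hf x]
    linarith [(hcM x).1]
  · have hM : 0 ≤ M := hc.le.trans ((hcM 0).1.trans (hcM 0).2)
    have : ‖f‖ ≤ M + ‖f‖ / 2 := by
      refine (BoundedContinuousFunction.norm_le (by positivity)).2 fun x => ?_
      rw [hf x]
      refine (norm_add_le _ _).trans (add_le_add ?_ ?_)
      · rw [Real.norm_of_nonneg (rho_pos_s19 hζ _).le]; exact (hcM x).2
      · exact J_op_abs hζ hq x f.continuous (norm_nonneg _) (fun y => f.norm_coe_le_norm y)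
    have h2 := f.norm_coe_le_norm x
    rw [Real.norm_eq_abs] at h2
    linarith

lemma swap_cont {F : ℝ → ℝ → ℝ} (hF : Continuous (Function.uncurry F)) {a b c d : ℝ} :
    ∫ x in a..b, ∫ y in c..d, F x y = ∫ y in c..d, ∫ x in a..b, F x y := by
  apply MeasureTheory.intervalIntegral_intervalIntegral_swap
  refine (hF.continuousOn.integrableOn_compact
    (isCompact_uIcc.prod isCompact_uIcc)).mono_set
    (Set.prod_mono Set.uIoc_subset_uIcc Set.uIoc_subset_uIcc)

lemma sol_isBE {ζ q : ℝ} (hζ : 0 < ζ) {f : ℝ → ℝ} (hfc : Continuous f)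
    (hf : ∀ x, f x = rhoMs ζ x + ∫ y in q..(π - q), JJ ζ (x - y) * f y) : IsBEms ζ q f := by
  refine ⟨hfc, fun l => ?_⟩
  have hJ := (isF_J hζ).continuous
  have hK := (isF_K hζ).continuous
  have hr := (isF_rho hζ).continuous
  have hJo := J_op_cont (q := q) hζ hfc
  have hKf : Continuous fun m => Kms ζ (l - m) * f m := by fun_prop
  have hsplit := intervalIntegral.integral_add_adjacent_intervals (μ := volume)
    (hKf.intervalIntegrable (-q) q) (hKf.intervalIntegrable q (π - q))
  have hfull : ∫ m in (-q)..(π - q), Kms ζ (l - m) * f m =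
      (xiMs ζ l - rhoMs ζ l) + ∫ y in q..(π - q), (Kms ζ (l - y) - JJ ζ (l - y)) * f y := by
    have e1 : ∀ m, Kms ζ (l - m) * f m = Kms ζ (l - m) * rhoMs ζ m +
        ∫ y in q..(π - q), Kms ζ (l - m) * JJ ζ (m - y) * f y := by
      intro m
      conv_lhs => rw [hf m]
      rw [mul_add, ← intervalIntegral.integral_const_mul]
      simp_rw [mul_assoc]
    simp_rw [e1]
    rw [show π - q = -q + π by ring]
    rw [intervalIntegral.integral_add, K_rho hζ, swap_cont]
    · congr 1
      refine intervalIntegral.integral_congr (fun y _ => ?_)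
      rw [intervalIntegral.integral_mul_const, K_J hζ]
    · exact (by fun_prop : Continuous (Function.uncurry
        fun x y => Kms ζ (l - x) * JJ ζ (x - y) * f y))
    · exact (by fun_prop : Continuous fun m => Kms ζ (l - m) * rhoMs ζ m).intervalIntegrable _ _
    · refine Continuous.intervalIntegrable ?_ _ _
      exact intervalIntegral.continuous_parametric_intervalIntegral_of_continuous'
        (by fun_prop) _ _
  have hsub : ∫ y in q..(π - q), (Kms ζ (l - y) - JJ ζ (l - y)) * f y =
      (∫ y in q..(π - q), Kms ζ (l - y) * f y) - ∫ y in q..(π - q), JJ ζ (l - y) * f y := by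
    simp_rw [sub_mul]
    rw [intervalIntegral.integral_sub]
    · exact hKf.intervalIntegrable _ _
    · exact (by fun_prop : Continuous fun y => JJ ζ (l - y) * f y).intervalIntegrable _ _
  have := hf l
  linarith

lemma sol_mass {ζ q : ℝ} (hζ : 0 < ζ) {f : ℝ → ℝ} (hfc : Continuous f)
    (hf : ∀ x, f x = rhoMs ζ x + ∫ y in q..(π - q), JJ ζ (x - y) * f y) :
    1 - 2 * (∫ t in (-q)..q, f t) = ∫ t in q..(π - q), f t := by
  have hJ := (isF_J hζ).continuous
  have hr := (isF_rho hζ).continuous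
  have hJo := J_op_cont (q := q) hζ hfc
  have hsplit := intervalIntegral.integral_add_adjacent_intervals (μ := volume)
    (hfc.intervalIntegrable (-q) q) (hfc.intervalIntegrable q (π - q))
  have hfull : ∫ m in (-q)..(π - q), f m = 1 / 2 + (1 / 2) * ∫ y in q..(π - q), f y := by
    have e1 : ∫ m in (-q)..(π - q), f m = ∫ m in (-q)..(-q + π), (rhoMs ζ m +
      ∫ y in q..(π - q), JJ ζ (m - y) * f y) := by
      rw [show π - q = -q + π by ring]
      refine intervalIntegral.integral_congr (fun y _ => ?_)
      rw [hf y, show π - q = -q + π by ring]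
    rw [e1, intervalIntegral.integral_add (hr.intervalIntegrable _ _)
      (hJo.intervalIntegrable _ _), rho_int_s19 hζ, swap_cont]
    · congr 1
      rw [← intervalIntegral.integral_const_mul]
      refine intervalIntegral.integral_congr (fun y _ => ?_)
      rw [intervalIntegral.integral_mul_const, J_int' hζ]
    · exact (by fun_prop : Continuous (Function.uncurry fun x y => JJ ζ (x - y) * f y))
  linarith

/-- Main quantitative estimate. -/
lemma main_est {ζ : ℝ} (hζ : 0 < ζ) : ∃ c D : ℝ, 0 < c ∧ 0 ≤ D ∧ ∀ q ∈ Set.Icc 0 (π / 2), ∀ m : ℝ,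
    (∀ g : ℝ → ℝ, IsBEms ζ q g → (∫ t in (-q)..q, g t) = m) →
    c * (π - 2 * q) ≤ 1 - 2 * m ∧
    ∀ ε : ℝ, (∀ x ∈ Set.Icc q (π - q), |rhoMs ζ x - rhoMs ζ (π / 2)| ≤ ε) →
      |(1 - 2 * m) - rhoMs ζ (π / 2) * (π - 2 * q)| ≤ (ε + D * (π - 2 * q)) * (π - 2 * q) := by
  obtain ⟨c, M, hc, hcM⟩ := rho_bounds hζ
  obtain ⟨B, hB0, hB⟩ := J_bound hζ
  have hM : 0 ≤ M := hc.le.trans ((hcM 0).1.trans (hcM 0).2)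
  refine ⟨c, B * (2 * M), hc, by positivity, fun q hq m hm => ?_⟩
  have hle : q ≤ π - q := by linarith [hq.2]
  obtain ⟨f, hfc, -, hf, hfl, hfu⟩ := exists_sol hζ hq hc hcM
  have h1 := sol_mass hζ hfc hf
  rw [hm f (sol_isBE hζ hfc hf)] at h1
  rw [h1]
  constructor
  · have := intervalIntegral.integral_mono_on (μ := volume) hle
      ((continuous_const (y := c)).intervalIntegrable _ _) (hfc.intervalIntegrable _ _) (fun x _ => hfl x)
    simp at this
    linarith
  · intro ε hε
    have e : (∫ t in q..(π - q), f t) - rhoMs ζ (π / 2) * (π - 2 * q) =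
        ∫ t in q..(π - q), (f t - rhoMs ζ (π / 2)) := by
      rw [intervalIntegral.integral_sub (hfc.intervalIntegrable _ _)
        (continuous_const.intervalIntegrable _ _)]
      simp
      ring
    rw [e]
    have hn := intervalIntegral.norm_integral_le_of_norm_le_const (a := q) (b := π - q)
      (f := fun t => f t - rhoMs ζ (π / 2)) (C := ε + B * (2 * M) * (π - 2 * q)) (fun x hx => by
        rw [Set.uIoc_of_le hle] at hx
        have h2 := hε x ⟨hx.1.le, hx.2⟩
        have h3 : |f x - rhoMs ζ x| ≤ B * (2 * M) * (π - 2 * q) := by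
          rw [hf x, add_sub_cancel_left]
          have := intervalIntegral.norm_integral_le_of_norm_le_const (a := q) (b := π - q)
            (f := fun y => JJ ζ (x - y) * f y) (C := B * (2 * M)) (fun y _ => by
              rw [norm_mul, Real.norm_of_nonneg (J_nonneg hζ _)]
              exact mul_le_mul (hB _) (hfu y) (norm_nonneg _) hB0)
          rw [abs_of_nonneg (by linarith)] at this
          rw [Real.norm_eq_abs] at this
          linarith
        rw [Real.norm_eq_abs]
        have := abs_sub_le (f x) (rhoMs ζ x) (rhoMs ζ (π / 2))
        linarith)
    rw [abs_of_nonneg (by linarith : (0 : ℝ) ≤ π - q - q)] at hn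
    rw [Real.norm_eq_abs] at hn
    linarith

/-- **Asymptotics of the quantile `Q(m)` as `m → 1/2⁻` in the regime `Δ < -1`**
(Lemma D.3): if `Q : [0,1/2) → [0,π/2]` satisfies
`∫_{-Q(m)}^{Q(m)} ρ(λ|Q(m))dλ = m` for all `m`, then
`(1-2m)/(π-2Q(m)) → ρ(π/2)` as `m → 1/2⁻`. -/
theorem quantile_asymptotics_massive (ζ : ℝ) (hζ : 0 < ζ) (Q : ℝ → ℝ)
    (hQ : ∀ m : ℝ, 0 ≤ m → m < 1 / 2 →
      Q m ∈ Set.Icc 0 (π / 2) ∧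
      ∀ g : ℝ → ℝ, IsBEms ζ (Q m) g → (∫ t in (-(Q m))..(Q m), g t) = m) :
    Tendsto (fun m : ℝ => (1 - 2 * m) / (π - 2 * Q m))
      (nhdsWithin (1 / 2) (Set.Iio (1 / 2))) (nhds (rhoMs ζ (π / 2))) := by
  obtain ⟨c, D, hc, hD, hmain⟩ := main_est hζ
  have hcont := (isF_rho hζ).continuous
  rw [Metric.tendsto_nhdsWithin_nhds]
  intro ε hε
  obtain ⟨δ, hδ, hδ'⟩ := Metric.continuousAt_iff.1 (hcont.continuousAt (x := π / 2)) (ε / 2)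
    (by positivity)
  refine ⟨min (1 / 2) (min (c * δ / 2) (c * ε / (4 * (D + 1)))), by positivity, fun m hm hd => ?_⟩
  have hm1 : m < 1 / 2 := hm
  rw [Real.dist_eq, abs_of_neg (by linarith)] at hd
  have d1 := lt_of_lt_of_le hd (min_le_left _ _)
  have d2 := lt_of_lt_of_le hd ((min_le_right _ _).trans (min_le_left _ _))
  have d3 := lt_of_lt_of_le hd ((min_le_right _ _).trans (min_le_right _ _))
  obtain ⟨hq, hg⟩ := hQ m (by linarith) hm1
  obtain ⟨h1, h2⟩ := hmain (Q m) hq m hg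
  have hL : 0 ≤ π - 2 * Q m := by linarith [hq.2]
  have hLδ : π - 2 * Q m < δ := by
    have : c * (π - 2 * Q m) < c * δ := by linarith
    exact lt_of_mul_lt_mul_left this hc.le
  have hLε : D * (π - 2 * Q m) < ε / 2 := by
    have h5 : c * (π - 2 * Q m) < c * (ε / (2 * (D + 1))) := by
      have : c * (ε / (2 * (D + 1))) = 2 * (c * ε / (4 * (D + 1))) := by field_simp; ring
      linarith
    have h6 := lt_of_mul_lt_mul_left h5 hc.le
    rw [lt_div_iff₀ (by positivity)] at h6
    nlinarith
  have h3 := h2 (ε / 2) (fun x hx => by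
    have := hδ' (x := x) (by
      rw [Real.dist_eq, abs_lt]
      constructor <;> linarith [hx.1, hx.2])
    rw [Real.dist_eq] at this
    exact this.le)
  have hL0 : 0 < π - 2 * Q m := by
    rcases hL.lt_or_eq with h | h
    · exact h
    · rw [← h] at h3
      simp at h3
      linarith
  rw [Real.dist_eq]
  have e : (1 - 2 * m) / (π - 2 * Q m) - rhoMs ζ (π / 2) =
      ((1 - 2 * m) - rhoMs ζ (π / 2) * (π - 2 * Q m)) / (π - 2 * Q m) := by
    field_simp
  rw [e, abs_div, abs_of_pos hL0, div_lt_iff₀ hL0]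
  nlinarith

end BetheSix
end
end
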